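/- arXiv:math/0305164 — 2 statements merged into one kernel-verified Lean document; each statement's English description precedes it below -/
import Mathlib

section
/- There exists a weak-QFT subshift with infinitely many (countably many) maximum measures. -/
open Filter Set MeasureTheory

namespace QFTPaper

variable {A : Type*} {B : Type*}

/-- The left shift on bi-infinite sequences over the alphabet `A`. -/
def shift (x : ℤ → A) : ℤ → A := fun n => x (n + 1)

/-- A subshift: a closed, shift-invariant subset of `A^ℤ`. -/
def IsSubshift [TopologicalSpace A] (X : Set (ℤ → A)) : Prop :=
  IsClosed X ∧ shift '' X = X

/-- The finite word `w` occurs in `x` at position `k`. -/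
def OccursAt (w : List A) (x : ℤ → A) (k : ℤ) : Prop :=
  ∀ i : Fin w.length, x (k + (i : ℕ)) = w.get i

/-- The language of `X`: words of length `n` occurring in elements of `X`
(at position `0`, which is no restriction by shift-invariance). -/
def Lang (X : Set (ℤ → A)) (n : ℕ) : Set (List A) :=
  { w | w.length = n ∧ ∃ x ∈ X, OccursAt w x 0 }

/-- Topological entropy of a subshift. -/
noncomputable def hTop (X : Set (ℤ → A)) : ℝ :=
  limsup (fun n : ℕ => Real.log (Nat.card ↥(Lang X n)) / (n : ℝ)) atTop

/-- Follower set of the finite word `w = A₋ₙ…A₀` (listed from `A₋ₙ` to `A₀`):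
the set of one-sided sequences `B₀B₁B₂…` with `B ∈ X` and `B₋ₙ…B₀ = A₋ₙ…A₀`,
realized by requiring `w` to occur in `B` at positions `0,…,n` and reading off
the tail of `B` starting at the position of the last letter of `w`.
For the empty word this gives `X₊` (by shift-invariance). -/
def fol (X : Set (ℤ → A)) (w : List A) : Set (ℕ → A) :=
  { y | ∃ B ∈ X, (∀ i : Fin w.length, B ((i : ℕ) : ℤ) = w.get i) ∧
        ∀ k : ℕ, y k = B ((w.length : ℤ) - 1 + (k : ℤ)) }

/-- `w = A₋ₙ…A₀` is a left constraint:
`∅ ≠ fol(A₋ₙ…A₀) ⊊ fol(A₋ₙ₊₁…A₀)`. -/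
def IsLeftConstraint (X : Set (ℤ → A)) (w : List A) : Prop :=
  w ≠ [] ∧ fol X w ≠ ∅ ∧ fol X w ⊂ fol X w.tail

/-- `𝒞(X, n)`: the set of left constraints of length `n`. -/
def LC (X : Set (ℤ → A)) (n : ℕ) : Set (List A) :=
  { w | w.length = n ∧ IsLeftConstraint X w }

/-- The left constraint entropy `h_𝒞(X) = limsup (1/n) log⁺ #𝒞(X,n)`. -/
noncomputable def hC (X : Set (ℤ → A)) : ℝ :=
  limsup (fun n : ℕ => max 0 (Real.log (Nat.card ↥(LC X n))) / (n : ℝ)) atTop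

/-- The time-reversed subshift `X̄`. -/
def rev (X : Set (ℤ → A)) : Set (ℤ → A) :=
  (fun x : ℤ → A => fun n : ℤ => x (-n)) '' X

/-- The symmetric constraint entropy `h_𝒮𝒞(X) = min (h_𝒞(X), h_𝒞(X̄))`. -/
noncomputable def hSC (X : Set (ℤ → A)) : ℝ := min (hC X) (hC (rev X))

/-- Subshift of quasi-finite type: `h_𝒮𝒞(X) < h_top(X)`. -/
def IsQFT [TopologicalSpace A] (X : Set (ℤ → A)) : Prop :=
  IsSubshift X ∧ hSC X < hTop X

/-- The word `B₋ₘ…B₀` read off from a one-sided past `b` (where `b j = B₋ⱼ`). -/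
def wordOf (b : ℕ → A) (m : ℕ) : List A :=
  (List.range (m + 1)).map fun j => b (m - j)

/-- An extendable left constraint: a left constraint `A₋ₙ…A₀` which admits a
one-sided past `B` extending it such that `B₋ₘ…B₀` is again a left constraint
for infinitely many `m`. -/
def IsExtendable (X : Set (ℤ → A)) (w : List A) : Prop :=
  IsLeftConstraint X w ∧
  ∃ b : ℕ → A, wordOf b (w.length - 1) = w ∧
    ∀ N : ℕ, ∃ m, N ≤ m ∧ IsLeftConstraint X (wordOf b m)

/-- `𝒞*(X, n)`: the set of extendable left constraints of length `n`. -/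
def ELC (X : Set (ℤ → A)) (n : ℕ) : Set (List A) :=
  { w | w.length = n ∧ IsExtendable X w }

/-- The extendable left constraint entropy `h*_𝒞(X)`. -/
noncomputable def hCstar (X : Set (ℤ → A)) : ℝ :=
  limsup (fun n : ℕ => Real.log (Nat.card ↥(ELC X n)) / (n : ℝ)) atTop

/-- `h*_𝒮𝒞(X) = min (h*_𝒞(X), h*_𝒞(X̄))`. -/
noncomputable def hSCstar (X : Set (ℤ → A)) : ℝ := min (hCstar X) (hCstar (rev X))

/-- Subshift of weak quasi-finite type: `h*_𝒮𝒞(X) < h_top(X)`. -/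
def IsWeakQFT [TopologicalSpace A] (X : Set (ℤ → A)) : Prop :=
  IsSubshift X ∧ hSCstar X < hTop X

/-- Subshift of finite type: defined by excluding a finite set of finite words. -/
def IsSFT (X : Set (ℤ → A)) : Prop :=
  ∃ F : Finset (List A), X = { x | ∀ w ∈ F, ∀ k : ℤ, ¬ OccursAt w x k }

/-- Sofic subshift: the image of an SFT under a continuous shift-commuting map. -/
def IsSofic [TopologicalSpace A] (X : Set (ℤ → A)) : Prop :=
  ∃ (B : Type) (_ : Fintype B) (Y : Set (ℤ → B)) (π : (ℤ → B) → (ℤ → A)),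
    IsSFT Y ∧
    (letI : TopologicalSpace B := ⊥
     Continuous π) ∧
    (∀ x : ℤ → B, π (shift x) = shift (π x)) ∧ π '' Y = X


/-- Topological conjugacy of subshifts: a homeomorphism commuting with the shifts. -/
def Conjugate [TopologicalSpace A] [TopologicalSpace B]
    (X : Set (ℤ → A)) (Y : Set (ℤ → B)) : Prop :=
  ∃ φ : X ≃ₜ Y, ∀ x x' : X, (x' : ℤ → A) = shift (x : ℤ → A) →
    (φ x' : ℤ → B) = shift (φ x : ℤ → B)

/-- The cylinder of a word of length `n` placed at positions `0,…,n-1`. -/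
def cylSet (n : ℕ) (w : Fin n → A) : Set (ℤ → A) :=
  { x | ∀ i : Fin n, x ((i : ℕ) : ℤ) = w i }

/-- Entropy of the partition of `A^ℤ` into cylinders of length `n`. -/
noncomputable def blockEntropy [Fintype A] [MeasurableSpace A]
    (μ : Measure (ℤ → A)) (n : ℕ) : ℝ :=
  ∑ w : Fin n → A, Real.negMulLog ((μ (cylSet n w)).toReal)

/-- Kolmogorov–Sinai entropy of a shift-invariant measure on `A^ℤ`,
computed with the natural (generating) partition into cylinders. -/
noncomputable def KSEntropy [Fintype A] [MeasurableSpace A]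
    (μ : Measure (ℤ → A)) : ℝ :=
  ⨅ n : ℕ, blockEntropy μ (n + 1) / (n + 1)

/-- A maximum measure: an ergodic shift-invariant Borel probability measure
carried by `X` whose Kolmogorov–Sinai entropy equals the topological entropy of `X`. -/
def IsMaxMeasure [Fintype A] [MeasurableSpace A]
    (X : Set (ℤ → A)) (μ : Measure (ℤ → A)) : Prop :=
  IsProbabilityMeasure μ ∧ μ Xᶜ = 0 ∧ Ergodic shift μ ∧ KSEntropy μ = hTop X

/-- The number of points of `X` fixed by the `n`-th power of the shift. -/
noncomputable def perCount (X : Set (ℤ → A)) (n : ℕ) : ℕ :=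
  Nat.card {x : ℤ → A | x ∈ X ∧ shift^[n] x = x}

/-! ### The alphabet and the marker subshift -/

/-- The alphabet: a free bit and a marker bit. -/
@[ext] structure Al where
  /-- free bit -/
  fst : Bool
  /-- marker bit -/
  snd : Bool

/-- `Al` is a product. -/
def Al.equiv : Bool × Bool ≃ Al where
  toFun q := ⟨q.1, q.2⟩
  invFun a := ⟨a.1, a.2⟩
  left_inv _ := rfl
  right_inv _ := rfl

instance : Fintype Al := Fintype.ofEquiv _ Al.equiv
instance : DecidableEq Al := Al.equiv.symm.decidableEq
instance : TopologicalSpace Al := ⊥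
instance : DiscreteTopology Al := ⟨rfl⟩
instance : MeasurableSpace Al := ⊤
instance : DiscreteMeasurableSpace Al := ⟨fun _ => trivial⟩

/-- `i` and `i + d` are consecutive markers of `s`. -/
def Consec (s : ℤ → Bool) (i : ℤ) (d : ℕ) : Prop :=
  0 < d ∧ s i = true ∧ s (i + d) = true ∧ ∀ e : ℕ, 0 < e → e < d → s (i + e) = false

/-- Marker sequences: from two consecutive markers on, the sequence is periodic. -/
def MY (s : ℤ → Bool) : Prop :=
  ∀ (i : ℤ) (d : ℕ), Consec s i d → ∀ k : ℕ, s (i + k) = true ↔ d ∣ k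

/-- Second coordinate. -/
def snd' (x : ℤ → Al) : ℤ → Bool := fun n => (x n).2

/-- The subshift. -/
def XX : Set (ℤ → Al) := {x | MY (snd' x)}

lemma MY_translate {s : ℤ → Bool} (h : MY s) (c : ℤ) : MY (fun n => s (n + c)) := by
  intro i d ⟨h1, h2, h3, h4⟩ k
  have := h (i + c) d ⟨h1, h2, by rw [← h3]; congr 1; ring, fun e he1 he2 => by
    rw [← h4 e he1 he2]; congr 1; ring⟩ k
  rw [← this]
  have : i + c + k = i + k + c := by ring
  rw [this]

lemma MY_truncate {s : ℤ → Bool} (h : MY s) (K : ℤ) :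
    MY (fun n => if n ≤ K then false else s n) := by
  intro i d ⟨h1, h2, h3, h4⟩ k
  have hi : K < i := by
    by_contra hc
    simp [not_lt.1 hc] at h2
  have hk : ∀ k : ℕ, ¬ (i + (k : ℤ) ≤ K) := fun k => by omega
  simp only [hk, if_false, not_le.2 hi] at h2 h3 h4 ⊢
  exact h i d ⟨h1, h2, h3, h4⟩ k

lemma exists_consec {s : ℤ → Bool} {i : ℤ} (d : ℕ) (hd : 0 < d) (hi : s i = true)
    (hj : s (i + d) = true) : ∃ d', d' ≤ d ∧ Consec s i d' := by
  classical
  have hex : ∃ e : ℕ, 0 < e ∧ s (i + e) = true := ⟨d, hd, hj⟩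
  refine ⟨Nat.find hex, Nat.find_min' hex ⟨hd, hj⟩, (Nat.find_spec hex).1, hi,
    (Nat.find_spec hex).2, fun e he1 he2 => ?_⟩
  have := Nat.find_min hex he2
  simpa [he1] using this

/-- Two marker sequences agreeing on a window with two markers agree to the right of it. -/
lemma MY_determined {s t : ℤ → Bool} (hs : MY s) (ht : MY t) {i : ℤ} {d : ℕ} (hd : 0 < d)
    (hi : s i = true) (hj : s (i + d) = true)
    (hst : ∀ e : ℕ, e ≤ d → s (i + e) = t (i + e)) (k : ℕ) : s (i + k) = t (i + k) := by
  obtain ⟨d', hd', hc⟩ := exists_consec d hd hi hj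
  have hct : Consec t i d' := by
    obtain ⟨h1, h2, h3, h4⟩ := hc
    refine ⟨h1, ?_, ?_, fun e he1 he2 => ?_⟩
    · have := hst 0 (by omega)
      simp at this; rw [← this]; exact h2
    · rw [← hst d' hd']; exact h3
    · rw [← hst e (by omega)]; exact h4 e he1 he2
  have := (hs i d' hc k).trans (ht i d' hct k).symm
  exact Bool.eq_iff_iff.2 this

lemma isClosed_XX : IsClosed XX := by
  have hc : ∀ (i : ℤ) (b : Bool), IsClopen {x : ℤ → Al | snd' x i = b} := fun i b => by
    have : {x : ℤ → Al | snd' x i = b} = (fun x : ℤ → Al => x i) ⁻¹' {a : Al | a.2 = b} := rfl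
    rw [this]
    exact (isClopen_discrete _).preimage (continuous_apply i)
  have : XX = ⋂ (i : ℤ) (d : ℕ) (k : ℕ),
      {x : ℤ → Al | Consec (snd' x) i d → (snd' x (i + k) = true ↔ d ∣ k)} := by
    ext x
    simp only [XX, MY, mem_ofPred_eq, mem_iInter]
    exact ⟨fun h i d k hh => h i d hh k, fun h i d hh k => h i d k hh⟩
  rw [this]
  refine isClosed_iInter fun i => isClosed_iInter fun d => isClosed_iInter fun k => ?_
  have h1 : IsOpen {x : ℤ → Al | Consec (snd' x) i d} := by
    have : {x : ℤ → Al | Consec (snd' x) i d} = {x | 0 < d} ∩ ({x | snd' x i = true} ∩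
        ({x | snd' x (i + d) = true} ∩
          ⋂ e ∈ Finset.Ioo 0 d, {x : ℤ → Al | snd' x (i + (e : ℕ)) = false})) := by
      ext x
      simp [Consec]
    rw [this]
    exact isOpen_const.inter ((hc _ _).isOpen.inter ((hc _ _).isOpen.inter
      (isOpen_biInter_finset fun e _ => (hc _ _).isOpen)))
  have h2 : IsClosed {x : ℤ → Al | snd' x (i + k) = true ↔ d ∣ k} := by
    by_cases hk : d ∣ k
    · simpa [hk] using (hc (i + k) true).isClosed
    · simpa [hk] using (hc (i + k) false).isClosed
  have : {x : ℤ → Al | Consec (snd' x) i d → (snd' x (i + k) = true ↔ d ∣ k)} =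
      {x : ℤ → Al | Consec (snd' x) i d}ᶜ ∪ {x : ℤ → Al | snd' x (i + k) = true ↔ d ∣ k} := by
    ext x
    simp only [mem_ofPred_eq, mem_union, mem_compl_iff]
    tauto
  rw [this]
  exact h1.isClosed_compl.union h2

lemma isSubshift_XX : IsSubshift XX := by
  refine ⟨isClosed_XX, ?_⟩
  ext x
  constructor
  · rintro ⟨y, hy, rfl⟩
    exact MY_translate hy 1
  · intro hx
    refine ⟨fun n => x (n + (-1)), MY_translate hx (-1), ?_⟩
    funext n
    simp [shift]

/-! ### No extendable constraints -/

lemma wordOf_length (b : ℕ → Al) (m : ℕ) : (wordOf b m).length = m + 1 := by simp [wordOf]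

lemma wordOf_get (b : ℕ → Al) (m : ℕ) (i : Fin (wordOf b m).length) :
    (wordOf b m).get i = b (m - i) := by
  rw [List.get_eq_getElem]
  simp [wordOf]

lemma wordOf_tail (b : ℕ → Al) (m : ℕ) : (wordOf b (m + 1)).tail = wordOf b m := by
  apply List.ext_get
  · simp [wordOf]
  · intro n h1 h2
    simp [wordOf]

lemma mem_fol_wordOf (b : ℕ → Al) (m : ℕ) (y : ℕ → Al) :
    y ∈ fol XX (wordOf b m) ↔ ∃ B ∈ XX, (∀ i : ℕ, i ≤ m → B (i : ℤ) = b (m - i)) ∧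
      ∀ k : ℕ, y k = B ((m : ℤ) + k) := by
  simp only [fol, mem_ofPred_eq, wordOf_length, wordOf_get]
  refine exists_congr fun B => and_congr_right fun _ => and_congr ?_ ?_
  · constructor
    · intro h i hi
      exact h ⟨i, by rw [wordOf_length]; omega⟩
    · rintro h ⟨i, hi⟩
      rw [wordOf_length] at hi
      exact h i (by omega)
  · simp

lemma eventually_not_constraint (b : ℕ → Al) :
    ∃ N, ∀ m, N ≤ m → ¬ IsLeftConstraint XX (wordOf b m) := by
  by_cases hb : ∃ N, ∀ j, N ≤ j → (b j).2 = false
  · obtain ⟨N, hN⟩ := hb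
    refine ⟨N + 1, fun m hm hc => ?_⟩
    obtain ⟨m, rfl⟩ : ∃ m', m = m' + 1 := ⟨m - 1, by omega⟩
    apply hc.2.2.2
    rw [wordOf_tail]
    intro y hy
    rw [mem_fol_wordOf] at hy ⊢
    obtain ⟨B, hB, hw, hy⟩ := hy
    refine ⟨fun n => if n ≤ 0 then b (m + 1) else B (n + (-1)), ?_, ?_, ?_⟩
    · have := MY_truncate (MY_translate hB (-1)) 0
      have h2 : (fun n => if n ≤ 0 then false else (fun n => snd' B (n + (-1))) n) =
        snd' (fun n : ℤ => if n ≤ 0 then b (m + 1) else B (n + (-1))) := by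
        funext n
        by_cases hn : n ≤ 0
        · simp [snd', hn, hN (m + 1) (by omega)]
        · simp [snd', hn]
      rw [h2] at this
      exact this
    · intro i hi
      rcases i with _ | i
      · simp
      · have := hw i (by omega)
        have h3 : ¬ (((i + 1 : ℕ) : ℤ) ≤ 0) := by omega
        simp only [h3, if_false]
        have h4 : ((i + 1 : ℕ) : ℤ) + (-1) = i := by push_cast; ring
        rw [h4, this]
        congr 1
        omega
    · intro k
      have h3 : ¬ (((m + 1 : ℕ) : ℤ) + k ≤ 0) := by omega
      simp only [h3, if_false]
      rw [hy k]
      congr 1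
      push_cast; ring
  · push Not at hb
    obtain ⟨j1, -, h1⟩ := hb 0
    obtain ⟨j2, hj2, h2⟩ := hb (j1 + 1)
    refine ⟨j2 + 1, fun m hm hc => ?_⟩
    obtain ⟨m, rfl⟩ : ∃ m', m = m' + 1 := ⟨m - 1, by omega⟩
    apply hc.2.2.2
    rw [wordOf_tail]
    intro y hy
    obtain ⟨y0, hy0⟩ := nonempty_iff_ne_empty.2 hc.2.1
    rw [mem_fol_wordOf] at hy hy0 ⊢
    obtain ⟨B, hB, hw, hy⟩ := hy
    obtain ⟨B0, hB0, hw0, -⟩ := hy0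
    refine ⟨fun n => if n ≤ 0 then B0 n else B (n + (-1)), ?_, ?_, ?_⟩
    · have h2 : snd' (fun n : ℤ => if n ≤ 0 then B0 n else B (n + (-1))) = snd' B0 := by
        funext n
        by_cases hn : n ≤ 0
        · simp [snd', hn]
        · simp only [snd', hn, if_false]
          have hag : ∀ e : ℕ, e ≤ m → B0 (1 + (e : ℤ)) = B ((1 + (e : ℤ)) + (-1)) := by
            intro e he
            have a1 := hw0 (e + 1) (by omega)
            have a2 := hw e he
            have a3 : ((1 : ℤ) + e) + (-1) = e := by ring
            have a4 : ((1 : ℤ) + e) = ((e + 1 : ℕ) : ℤ) := by push_cast; ring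
            rw [a3, a4, a1, a2]
            congr 1
            omega
          have key := MY_determined hB0 (MY_translate hB (-1)) (i := 1 + ((m - j2 : ℕ) : ℤ))
            (d := j2 - j1) (by omega)
            (by
              have := hw0 (m + 1 - j2) (by omega)
              have a4 : (1 : ℤ) + ((m - j2 : ℕ) : ℤ) = ((m + 1 - j2 : ℕ) : ℤ) := by omega
              rw [a4]; simp only [snd']; rw [this]
              have : m + 1 - (m + 1 - j2) = j2 := by omega
              rw [this]; simpa using h2)
            (by
              have := hw0 (m + 1 - j1) (by omega)
              have a4 : (1 : ℤ) + ((m - j2 : ℕ) : ℤ) + ((j2 - j1 : ℕ) : ℤ)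
                = ((m + 1 - j1 : ℕ) : ℤ) := by omega
              rw [a4]; simp only [snd']; rw [this]
              have : m + 1 - (m + 1 - j1) = j1 := by omega
              rw [this]; simpa using h1)
            (by
              intro e he
              have := hag (m - j2 + e) (by omega)
              push_cast at this
              simp only [snd']
              rw [add_assoc, this])
          by_cases hlt : n ≤ m
          · have := hag (n - 1).toNat (by omega)
            have a5 : (1 : ℤ) + ((n - 1).toNat : ℤ) = n := by omega
            rw [a5] at this
            rw [this]
          · have := key (n - (1 + ((m - j2 : ℕ) : ℤ))).toNat
            have a5 : (1 + ((m - j2 : ℕ) : ℤ)) + ((n - (1 + ((m - j2 : ℕ) : ℤ))).toNat : ℤ) = n := by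
              omega
            rw [a5] at this
            exact this.symm
      change MY _
      rw [h2]
      exact hB0
    · intro i hi
      rcases i with _ | i
      · simpa using hw0 0 (by omega)
      · have := hw i (by omega)
        have h3 : ¬ (((i + 1 : ℕ) : ℤ) ≤ 0) := by omega
        simp only [h3, if_false]
        have h4 : ((i + 1 : ℕ) : ℤ) + (-1) = i := by push_cast; ring
        rw [h4, this]
        congr 1
        omega
    · intro k
      have h3 : ¬ (((m + 1 : ℕ) : ℤ) + k ≤ 0) := by omega
      simp only [h3, if_false]
      rw [hy k]
      congr 1
      push_cast; ring

lemma ELC_empty (n : ℕ) : ELC XX n = ∅ := by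
  ext w
  simp only [ELC, mem_ofPred_eq, mem_empty_iff_false, iff_false]
  rintro ⟨-, -, b, -, hb⟩
  obtain ⟨N, hN⟩ := eventually_not_constraint b
  obtain ⟨m, hm, h⟩ := hb N
  exact hN m hm h

lemma hCstar_XX : hCstar XX = 0 := by
  simp [hCstar, ELC_empty]

/-! ### Topological entropy -/

/-- Code of the marker words of length `n`. -/
def mword (n a d : ℕ) : Fin n → Bool := fun t => decide (a ≤ (t : ℕ) ∧ d ∣ (t : ℕ) - a)

lemma MY_window {s : ℤ → Bool} (hs : MY s) (n : ℕ) :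
    ∃ a d : ℕ, a ≤ n ∧ d ≤ n ∧ (fun t : Fin n => s ((t : ℕ) : ℤ)) = mword n a d := by
  classical
  by_cases h : ∃ a : ℕ, a < n ∧ s (a : ℤ) = true
  · have ha := Nat.find_spec h
    have hmin : ∀ m < Nat.find h, s (m : ℤ) = false := fun m hm => by
      have := Nat.find_min h hm
      have h3 : m < n := by omega
      simpa [h3] using this
    set a := Nat.find h
    by_cases h2 : ∃ d : ℕ, 0 < d ∧ a + d < n ∧ s ((a : ℤ) + d) = true
    · obtain ⟨d, hd, hdn, hsd⟩ := h2
      obtain ⟨d', hd', hc⟩ := exists_consec d hd ha.2 hsd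
      refine ⟨a, d', by omega, by omega, ?_⟩
      funext ⟨t, ht⟩
      by_cases hat : a ≤ t
      · have := hs a d' hc (t - a)
        have e : (a : ℤ) + ((t - a : ℕ) : ℤ) = t := by omega
        rw [e] at this
        simp only [mword, hat, true_and]
        rw [Bool.eq_iff_iff, this]; simp
      · simp [mword, hat, hmin t (by omega)]
    · push Not at h2
      refine ⟨a, 0, by omega, by omega, ?_⟩
      funext ⟨t, ht⟩
      rcases lt_trichotomy t a with hat | hat | hat
      · simp [mword, hat, hmin t hat]
      · simp [mword, hat, ha.2]
      · have := h2 (t - a) (by omega) (by omega)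
        have e : (a : ℤ) + ((t - a : ℕ) : ℤ) = t := by omega
        rw [e] at this
        simp only [mword]
        simp at this
        rw [this]
        symm
        simp
        intro; omega
  · push Not at h
    refine ⟨n, 0, le_rfl, by omega, ?_⟩
    funext ⟨t, ht⟩
    have := h t ht
    simp at this
    simp [mword, this, ht]

lemma Lang_XX_subset (n : ℕ) : Lang XX n ⊆
    (fun q : (Fin n → Bool) × Fin (n + 1) × Fin (n + 1) =>
      List.ofFn fun t : Fin n => (⟨q.1 t, mword n q.2.1 q.2.2 t⟩ : Al)) '' univ := by
  rintro w ⟨hw, x, hx, ho⟩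
  obtain ⟨a, d, ha, hd, h⟩ := MY_window hx n
  refine ⟨⟨fun t => (x ((t : ℕ) : ℤ)).1, ⟨a, by omega⟩, ⟨d, by omega⟩⟩, trivial, ?_⟩
  subst hw
  apply List.ext_get
  · simp
  · intro t h1 h2
    have h3 := congrFun h ⟨t, h2⟩
    have h4 := ho ⟨t, h2⟩
    simp only [zero_add] at h4
    simp only [List.get_ofFn]
    rw [← h4]
    simp only [snd'] at h3
    ext
    · simp
    · simpa using h3.symm

lemma Lang_XX_finite (n : ℕ) : (Lang XX n).Finite :=
  (finite_univ.image _).subset (Lang_XX_subset n)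

lemma card_Lang_le (n : ℕ) : Nat.card (Lang XX n) ≤ 2 ^ n * (n + 1) ^ 2 := by
  rw [Nat.card_coe_set_eq]
  refine (ncard_le_ncard (Lang_XX_subset n) (finite_univ.image _)).trans ?_
  refine (ncard_image_le finite_univ).trans ?_
  rw [ncard_univ]
  simp [Nat.card_eq_fintype_card, sq]

lemma MY_false : MY (fun _ => false) := by
  rintro i d ⟨_, h, _⟩
  simp at h

lemma le_card_Lang (n : ℕ) : 2 ^ n ≤ Nat.card (Lang XX n) := by
  rw [Nat.card_coe_set_eq]
  have hi : Function.Injective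
      (fun q : Fin n → Bool => List.ofFn fun t : Fin n => (⟨q t, false⟩ : Al)) := by
    intro q q' h
    have := List.ofFn_injective h
    funext t
    exact congrArg Al.fst (congrFun this t)
  have h2 : ((fun q : Fin n → Bool => List.ofFn fun t : Fin n => (⟨q t, false⟩ : Al)) '' univ)
      ⊆ Lang XX n := by
    rintro _ ⟨q, -, rfl⟩
    refine ⟨by simp, fun k => if h : k.toNat < n then ⟨q ⟨k.toNat, h⟩, false⟩ else ⟨false, false⟩,
      ?_, ?_⟩
    · have : snd' (fun k : ℤ => if h : k.toNat < n then (⟨q ⟨k.toNat, h⟩, false⟩ : Al)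
          else ⟨false, false⟩) = fun _ => false := by
        funext k
        simp only [snd']
        split <;> rfl
      change MY _
      rw [this]
      exact MY_false
    · rintro ⟨i, hi⟩
      simp at hi
      simp [hi]
  refine le_trans ?_ (ncard_le_ncard h2 (Lang_XX_finite n))
  rw [ncard_image_of_injective _ hi, ncard_univ]
  simp [Nat.card_eq_fintype_card]

lemma tendsto_log_div : Tendsto (fun n : ℕ => Real.log (n + 1) / (n : ℝ)) atTop (nhds 0) := by
  have h := (Real.isLittleO_log_id_atTop.tendsto_div_nhds_zero).comp
    (tendsto_atTop_add_const_right atTop (1 : ℝ) tendsto_natCast_atTop_atTop)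
  have h2 : Tendsto (fun n : ℕ => ((n : ℝ) + 1) / n) atTop (nhds 1) := by
    have : Tendsto (fun n : ℕ => 1 + 1 / (n : ℝ)) atTop (nhds (1 + 0)) :=
      tendsto_const_nhds.add tendsto_one_div_atTop_nhds_zero_nat
    rw [add_zero] at this
    refine this.congr' ?_
    filter_upwards [eventually_gt_atTop 0] with n hn
    field_simp
  have h3 := h.mul h2
  rw [zero_mul] at h3
  refine h3.congr' ?_
  filter_upwards [eventually_gt_atTop 0] with n hn
  simp
  field_simp

lemma hTop_XX : hTop XX = Real.log 2 := by
  apply Tendsto.limsup_eq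
  have hu : Tendsto (fun n : ℕ => Real.log 2 + 2 * (Real.log (n + 1) / (n : ℝ))) atTop
      (nhds (Real.log 2)) := by
    simpa using tendsto_const_nhds (x := Real.log 2).add (tendsto_log_div.const_mul 2)
  refine tendsto_of_tendsto_of_tendsto_of_le_of_le' tendsto_const_nhds hu ?_ ?_
  · filter_upwards [eventually_gt_atTop 0] with n hn
    have hn' : (0 : ℝ) < n := by exact_mod_cast hn
    rw [le_div_iff₀ hn', mul_comm, ← Real.log_pow]
    apply Real.log_le_log (by positivity)
    exact_mod_cast le_card_Lang n
  · filter_upwards [eventually_gt_atTop 0] with n hn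
    have hn' : (0 : ℝ) < n := by exact_mod_cast hn
    have hpos : (0 : ℝ) < Nat.card (Lang XX n) := by
      have := le_card_Lang n
      have h2 : 0 < 2 ^ n := by positivity
      exact_mod_cast h2.trans_le this
    have h1 : Real.log (Nat.card (Lang XX n)) ≤ Real.log (2 ^ n * (n + 1) ^ 2) :=
      Real.log_le_log hpos (by exact_mod_cast card_Lang_le n)
    rw [Real.log_mul (by positivity) (by positivity), Real.log_pow, Real.log_pow] at h1
    rw [div_le_iff₀ hn']
    refine h1.trans (le_of_eq ?_)
    field_simp
    push_cast; ring

lemma isWeakQFT_XX : IsWeakQFT XX := by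
  refine ⟨isSubshift_XX, ?_⟩
  rw [hTop_XX]
  refine (min_le_left _ _).trans_lt ?_
  rw [hCstar_XX]
  exact Real.log_pos (by norm_num)

/-! ### The Bernoulli measure -/

lemma exists_cylinder_approx {A : Type*} [MeasurableSpace A] (μ : Measure (ℤ → A))
    [IsFiniteMeasure μ] {E : Set (ℤ → A)} (hE : MeasurableSet E) {ε : ℝ} (hε : 0 < ε) :
    ∃ (s : Finset ℤ) (S : Set (s → A)), MeasurableSet S ∧
      μ.real (symmDiff E (cylinder s S)) < ε := by
  have hd := Measure.MeasureDense.of_generateFrom_isSetAlgebra_finite μ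
    (𝒜 := measurableCylinders (fun _ : ℤ => A))
    ⟨empty_mem_measurableCylinders _, fun s hs => compl_mem_measurableCylinders hs,
      fun s t hs ht => union_mem_measurableCylinders hs ht⟩ generateFrom_measurableCylinders.symm
  obtain ⟨t, ht, h⟩ := hd.approx E hE (measure_ne_top _ _) ε hε
  obtain ⟨s, S, hS, rfl⟩ := (mem_measurableCylinders t).1 ht
  refine ⟨s, S, hS, ?_⟩
  rw [Measure.real]
  exact (ENNReal.lt_ofReal_iff_toReal_lt (measure_ne_top _ _)).1 h

/-- The fair coin. -/
noncomputable def coin : Measure Bool := (PMF.uniformOfFintype Bool).toMeasure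

instance : IsProbabilityMeasure coin := by unfold coin; infer_instance

lemma coin_singleton (b : Bool) : coin {b} = 2⁻¹ := by
  rw [coin, PMF.toMeasure_apply_singleton _ _ (measurableSet_singleton b)]
  simp

/-- The fair Bernoulli measure. -/
noncomputable def bern : Measure (ℤ → Bool) := Measure.infinitePi (fun _ => coin)

instance : IsProbabilityMeasure bern := by unfold bern; infer_instance

/-- Translation. -/
def tr {A : Type*} (c : ℤ) (x : ℤ → A) : ℤ → A := fun n => x (n + c)

lemma measurable_tr {A : Type*} [MeasurableSpace A] (c : ℤ) : Measurable (tr c : (ℤ → A) → _) :=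
  measurable_pi_lambda _ fun n => measurable_pi_apply (n + c)

lemma tr_bern (c : ℤ) : MeasurePreserving (tr c) bern bern := by
  refine ⟨measurable_tr c, ?_⟩
  apply Measure.eq_infinitePi
  intro s t ht
  have ht' : ∀ i : ℤ, t (i + c - c) = t i := fun i => by
    have e : i + c - c = i := by ring
    rw [e]
  rw [Measure.map_apply (measurable_tr c)
    (MeasurableSet.pi s.countable_toSet fun i _ => ht i)]
  have : tr c ⁻¹' (Set.pi s t) =
      Set.pi (s.map (Equiv.addRight c).toEmbedding : Finset ℤ) (fun i => t (i - c)) := by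
    ext x
    simp only [mem_preimage, Set.mem_pi, Finset.mem_coe, Finset.mem_map_equiv, tr]
    constructor
    · intro h i hi
      have := h (i - c) (by simpa [sub_eq_add_neg] using hi)
      simpa using this
    · intro h i hi
      have := h (i + c) (by simpa using hi)
      rw [← ht' i]
      exact this
  rw [this, bern, Measure.infinitePi_pi]
  · rw [Finset.prod_map]
    exact Finset.prod_congr rfl fun i _ => congrArg coin (ht' i)
  · intro i _
    exact ht _

lemma bern_cyl (n : ℕ) (c : ℤ) (w : Fin n → Bool) :
    bern {x | ∀ i : Fin n, x ((i : ℕ) + c) = w i} = (2⁻¹) ^ n := by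
  have h0 : {x : ℤ → Bool | ∀ i : Fin n, x ((i : ℕ) + c) = w i} =
      tr c ⁻¹' {x : ℤ → Bool | ∀ i : Fin n, x ((i : ℕ) : ℤ) = w i} := rfl
  have h1 : {x : ℤ → Bool | ∀ i : Fin n, x ((i : ℕ) : ℤ) = w i} =
      Set.pi ((Finset.range n).map Nat.castEmbedding : Finset ℤ)
        (fun i => if h : i.toNat < n then {w ⟨i.toNat, h⟩} else univ) := by
    ext x
    simp only [mem_ofPred_eq, Set.mem_pi, Finset.coe_map, Set.mem_image, Finset.coe_range]
    constructor
    · rintro h _ ⟨i, hi, rfl⟩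
      have hi' : i < n := hi
      simp [hi', h ⟨i, hi'⟩]
    · rintro h ⟨i, hi⟩
      have := h (i : ℤ) ⟨i, hi, rfl⟩
      simpa [hi] using this
  have hm : MeasurableSet {x : ℤ → Bool | ∀ i : Fin n, x ((i : ℕ) : ℤ) = w i} := by
    rw [h1]
    exact MeasurableSet.pi (Finset.countable_toSet _) fun i _ => MeasurableSet.of_discrete
  rw [h0, (tr_bern c).measure_preimage hm.nullMeasurableSet, h1, bern, Measure.infinitePi_pi]
  · rw [Finset.prod_map]
    rw [Finset.prod_congr rfl (g := fun _ => 2⁻¹)]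
    · simp
    · intro i hi
      have : i < n := Finset.mem_range.1 hi
      simp [this, coin_singleton]
  · intro i _
    exact MeasurableSet.of_discrete

lemma bern_indep (s : Finset ℤ) (S : Set (s → Bool)) (c : ℤ)
    (hd : Disjoint s (s.map (Equiv.addRight c).toEmbedding)) :
    bern.real (cylinder s S ∩ tr c ⁻¹' (cylinder s S)) =
      bern.real (cylinder s S) * bern.real (cylinder s S) := by
  have hS : MeasurableSet S := MeasurableSet.of_discrete
  have hI : ProbabilityTheory.iIndepFun (fun (i : ℤ) (ω : ℤ → Bool) => ω i) bern :=
    ProbabilityTheory.iIndepFun_infinitePi (P := fun _ : ℤ => coin) (X := fun _ b => b)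
      (fun _ => measurable_id)
  have h2 := hI.indepFun_finset s (s.map (Equiv.addRight c).toEmbedding) hd
    (fun i => measurable_pi_apply i)
  let g : ((s.map (Equiv.addRight c).toEmbedding : Finset ℤ) → Bool) → (s → Bool) :=
    fun z i => z ⟨i + c, by simp⟩
  have h3 := h2.measure_inter_preimage_eq_mul S (g ⁻¹' S) hS MeasurableSet.of_discrete
  have e1 : (fun (a : ℤ → Bool) (i : s) => a i) ⁻¹' S = cylinder s S := rfl
  have e2 : (fun (a : ℤ → Bool) (i : (s.map (Equiv.addRight c).toEmbedding : Finset ℤ)) => a i)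
      ⁻¹' (g ⁻¹' S) = tr c ⁻¹' (cylinder s S) := rfl
  rw [e1, e2, (tr_bern c).measure_preimage (MeasurableSet.cylinder s hS).nullMeasurableSet] at h3
  simp only [Measure.real]
  rw [h3, ENNReal.toReal_mul]

lemma tr_mul_preimage {A : Type*} {E : Set (ℤ → A)} {c : ℤ} (h : tr c ⁻¹' E = E) (k : ℕ) :
    tr (k * c) ⁻¹' E = E := by
  induction k with
  | zero =>
    have : (tr ((0 : ℕ) * c) : (ℤ → A) → _) = id := by funext x n; simp [tr]
    rw [this]; rfl
  | succ k ih =>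
    have : (tr ((k + 1 : ℕ) * c) : (ℤ → A) → _) = tr c ∘ tr (k * c) := by
      funext x n
      simp only [tr, Function.comp]
      congr 1
      push_cast; ring
    rw [this, preimage_comp, h, ih]

lemma exists_disjoint (s : Finset ℤ) (p : ℕ) (hp : 0 < p) :
    ∃ k : ℕ, Disjoint s (s.map (Equiv.addRight ((k : ℤ) * p)).toEmbedding) := by
  obtain ⟨M, hM⟩ : ∃ M : ℕ, ∀ i ∈ s, i.natAbs ≤ M :=
    ⟨s.sup Int.natAbs, fun i hi => Finset.le_sup hi⟩
  refine ⟨2 * M + 1, ?_⟩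
  rw [Finset.disjoint_left]
  intro i hi hi'
  simp only [Finset.mem_map, Equiv.coe_toEmbedding, Equiv.coe_addRight] at hi'
  obtain ⟨j, hj, rfl⟩ := hi'
  have h1 := hM _ hi
  have h2 := hM _ hj
  have h3 : ((2 * M + 1 : ℕ) : ℤ) ≤ ((2 * M + 1 : ℕ) : ℤ) * p := by
    have : (1 : ℤ) ≤ p := by exact_mod_cast hp
    nlinarith
  push_cast at h1 h2 h3
  omega

lemma bern_zero_one {E : Set (ℤ → Bool)} (hE : MeasurableSet E) {p : ℕ} (hp : 0 < p)
    (h : tr (p : ℤ) ⁻¹' E = E) : bern.real E = 0 ∨ bern.real E = 1 := by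
  have key : ∀ ε : ℝ, 0 < ε → |bern.real E - bern.real E * bern.real E| ≤ ε := by
    intro ε hε
    obtain ⟨s, S, hS, hC⟩ := exists_cylinder_approx bern hE (ε := ε / 4) (by positivity)
    set C : Set (ℤ → Bool) := cylinder s S with hCdef
    have hCm : MeasurableSet C := MeasurableSet.cylinder s hS
    obtain ⟨k, hk⟩ := exists_disjoint s p hp
    have hE' := tr_mul_preimage h k
    set c : ℤ := (k : ℤ) * p
    have hind := bern_indep s S c hk
    rw [← hCdef] at hind
    have h1 := abs_measureReal_sub_le_measureReal_symmDiff (μ := bern) hE.nullMeasurableSet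
      hCm.nullMeasurableSet
    have h2 := abs_measureReal_sub_le_measureReal_symmDiff (μ := bern) hE.nullMeasurableSet
      (hCm.inter (measurable_tr c hCm)).nullMeasurableSet
    have h3 : bern.real (symmDiff E (C ∩ tr c ⁻¹' C)) ≤
        bern.real (symmDiff E C) + bern.real (symmDiff E C) := by
      have h4 : bern.real (tr c ⁻¹' (symmDiff E C)) = bern.real (symmDiff E C) :=
        (tr_bern c).measureReal_preimage (hE.symmDiff hCm).nullMeasurableSet
      have h5 : symmDiff E (C ∩ tr c ⁻¹' C) ⊆ symmDiff E C ∪ tr c ⁻¹' (symmDiff E C) := by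
        intro x hx
        have hxE : tr c x ∈ E ↔ x ∈ E := by
          conv_rhs => rw [← hE']
          rfl
        simp only [Set.mem_symmDiff, mem_inter_iff, mem_preimage, mem_union] at hx ⊢
        rw [hxE]
        tauto
      calc _ ≤ bern.real (symmDiff E C ∪ tr c ⁻¹' (symmDiff E C)) := measureReal_mono h5
        _ ≤ _ := measureReal_union_le _ _
        _ = _ := by rw [h4]
    rw [hind] at h2
    have a1 : bern.real E ≤ 1 := measureReal_le_one
    have a2 : bern.real C ≤ 1 := measureReal_le_one
    have a3 : 0 ≤ bern.real E := measureReal_nonneg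
    have a4 : 0 ≤ bern.real C := measureReal_nonneg
    generalize bern.real E = e at *
    generalize bern.real C = f at *
    rw [abs_le] at *
    constructor <;> nlinarith
  have h0 : |bern.real E - bern.real E * bern.real E| ≤ 0 :=
    le_of_forall_pos_le_add fun ε hε => by simpa using key ε hε
  have h1 := abs_nonpos_iff.1 h0
  have h2 : bern.real E * (1 - bern.real E) = 0 := by linarith
  rcases mul_eq_zero.1 h2 with h | h
  · exact Or.inl h
  · exact Or.inr (by linarith)

/-! ### Entropy estimates -/

/-- Projection to the first `n` coordinates. -/
def proj (n : ℕ) (x : ℤ → Al) : Fin n → Al := fun i => x ((i : ℕ) : ℤ)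

lemma measurable_proj (n : ℕ) : Measurable (proj n) :=
  measurable_pi_lambda _ fun _ => measurable_pi_apply _

lemma cylSet_eq (n : ℕ) (w : Fin n → Al) : cylSet n w = proj n ⁻¹' {w} := by
  ext x
  simp only [cylSet, mem_ofPred_eq, mem_preimage, mem_singleton_iff, funext_iff, proj]

lemma measurableSet_cylSet (n : ℕ) (w : Fin n → Al) : MeasurableSet (cylSet n w) := by
  rw [cylSet_eq]
  exact measurable_proj n MeasurableSet.of_discrete

lemma sum_cyl (μ : Measure (ℤ → Al)) [IsProbabilityMeasure μ] (n : ℕ)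
    (C : Finset (Fin n → Al)) :
    ∑ w ∈ C, μ.real (cylSet n w) = μ.real (proj n ⁻¹' (C : Set (Fin n → Al))) := by
  simp only [cylSet_eq]
  exact sum_measureReal_preimage_singleton C fun w _ => measurable_proj n MeasurableSet.of_discrete

lemma sum_cyl_univ (μ : Measure (ℤ → Al)) [IsProbabilityMeasure μ] (n : ℕ) :
    ∑ w, μ.real (cylSet n w) = 1 := by
  rw [sum_cyl]
  simp

lemma negMulLog_le (q r : ℝ) (hq : 0 ≤ q) (hr : 0 < r) :
    Real.negMulLog q ≤ -q * Real.log r + r - q := by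
  rcases hq.eq_or_lt with rfl | hq
  · simpa using hr.le
  · have h := Real.log_le_sub_one_of_pos (div_pos hr hq)
    rw [Real.log_div hr.ne' hq.ne'] at h
    have h2 := mul_le_mul_of_nonneg_left h hq.le
    have h3 : q * (r / q - 1) = r - q := by field_simp
    rw [h3] at h2
    rw [Real.negMulLog]
    linarith

lemma blockEntropy_le (μ : Measure (ℤ → Al)) [IsProbabilityMeasure μ] (n : ℕ)
    (L C : Finset (Fin n → Al)) (hL : ∀ w ∉ L, μ.real (cylSet n w) = 0) (M δ : ℝ) (hM : 0 < M)
    (hδ : 0 < δ) (hLM : (L.card : ℝ) ≤ M) (hC : ((L ∩ C).card : ℝ) ≤ δ * M) :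
    blockEntropy μ n ≤
      Real.log (2 * M) + μ.real (proj n ⁻¹' (C : Set (Fin n → Al))) * Real.log δ := by
  classical
  set q : (Fin n → Al) → ℝ := fun w => μ.real (cylSet n w) with hq
  have hq0 : ∀ w, 0 ≤ q w := fun w => measureReal_nonneg
  have e1 : blockEntropy μ n = ∑ w ∈ L, Real.negMulLog (q w) := by
    rw [blockEntropy]
    symm
    apply Finset.sum_subset (Finset.subset_univ _)
    intro w _ hw
    have : q w = 0 := hL w hw
    change Real.negMulLog (q w) = 0
    rw [this]; simp
  have eL : ∑ w ∈ L, q w = 1 := by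
    rw [← sum_cyl_univ μ n]
    apply Finset.sum_subset (Finset.subset_univ _)
    intro w _ hw
    exact hL w hw
  have eC : ∑ w ∈ L ∩ C, q w = μ.real (proj n ⁻¹' (C : Set (Fin n → Al))) := by
    rw [← sum_cyl]
    apply Finset.sum_subset Finset.inter_subset_right
    intro w hw hw'
    exact hL w fun h => hw' (Finset.mem_inter.2 ⟨h, hw⟩)
  have hpt : ∀ w ∈ L, Real.negMulLog (q w) ≤
      q w * (Real.log (2 * M) - 1) + 1 / (2 * M) +
        (if w ∈ C then q w * Real.log δ + 1 / (2 * (δ * M)) else 0) := by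
    intro w _
    by_cases hw : w ∈ C
    · have := negMulLog_le (q w) (1 / (2 * (δ * M))) (hq0 w) (by positivity)
      rw [one_div, Real.log_inv, show 2 * (δ * M) = δ * (2 * M) by ring,
        Real.log_mul hδ.ne' (by positivity)] at this
      simp only [hw, if_true]
      rw [one_div, one_div, show 2 * (δ * M) = δ * (2 * M) by ring]
      have h0 : 0 ≤ (2 * M)⁻¹ := by positivity
      linarith
    · have := negMulLog_le (q w) (1 / (2 * M)) (hq0 w) (by positivity)
      rw [one_div, Real.log_inv] at this
      simp only [hw, if_false]
      rw [one_div]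
      linarith
  rw [e1]
  refine (Finset.sum_le_sum hpt).trans ?_
  rw [Finset.sum_add_distrib, Finset.sum_add_distrib, ← Finset.sum_mul, eL, ← Finset.sum_filter,
    Finset.filter_mem_eq_inter, Finset.sum_add_distrib, ← Finset.sum_mul, eC]
  simp only [Finset.sum_const, nsmul_eq_mul]
  have h1 : (L.card : ℝ) * (1 / (2 * M)) ≤ 1 / 2 := by
    rw [mul_one_div, div_le_div_iff₀ (by positivity) (by positivity)]
    linarith
  have h2 : ((L ∩ C).card : ℝ) * (1 / (2 * (δ * M))) ≤ 1 / 2 := by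
    rw [mul_one_div, div_le_div_iff₀ (by positivity) (by positivity)]
    linarith
  linarith

lemma blockEntropy_nonneg (μ : Measure (ℤ → Al)) [IsProbabilityMeasure μ] (n : ℕ) :
    0 ≤ blockEntropy μ n :=
  Finset.sum_nonneg fun _ _ => Real.negMulLog_nonneg measureReal_nonneg measureReal_le_one

lemma KS_le (μ : Measure (ℤ → Al)) [IsProbabilityMeasure μ] (n : ℕ) :
    KSEntropy μ ≤ blockEntropy μ (n + 1) / (n + 1) := by
  refine ciInf_le ⟨0, ?_⟩ n
  rintro _ ⟨m, rfl⟩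
  exact div_nonneg (blockEntropy_nonneg _ _) (by positivity)

lemma le_blockEntropy (μ : Measure (ℤ → Al)) [IsProbabilityMeasure μ] (n : ℕ)
    (h : ∀ w, μ.real (cylSet n w) ≤ (2⁻¹) ^ n) : n * Real.log 2 ≤ blockEntropy μ n := by
  have : n * Real.log 2 = ∑ w, μ.real (cylSet n w) * (n * Real.log 2) := by
    rw [← Finset.sum_mul, sum_cyl_univ, one_mul]
  rw [this, blockEntropy]
  apply Finset.sum_le_sum
  intro w _
  change _ ≤ Real.negMulLog (μ.real (cylSet n w))
  have h1 := h w
  have h0 : 0 ≤ μ.real (cylSet n w) := measureReal_nonneg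
  rcases h0.eq_or_lt with h0 | h0
  · rw [← h0]; simp
  · have h2 := Real.log_le_log h0 h1
    rw [Real.log_pow, Real.log_inv] at h2
    rw [Real.negMulLog]
    nlinarith

/-! ### The measures `nu` -/

/-- Attach a marker sequence. -/
def emb (y : ℤ → Bool) (j : ℕ) (x : ℤ → Bool) : ℤ → Al := fun n => ⟨x n, y (n + j)⟩

lemma measurable_emb (y : ℤ → Bool) (j : ℕ) : Measurable (emb y j) :=
  measurable_pi_lambda _ fun n =>
    (Measurable.of_discrete (f := fun b : Bool => (⟨b, y (n + j)⟩ : Al))).comp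
      (measurable_pi_apply n)

/-- Bernoulli measure times the periodic orbit measure. -/
noncomputable def nu (p : ℕ) (y : ℤ → Bool) : Measure (ℤ → Al) :=
  (p : ENNReal)⁻¹ • ∑ j ∈ Finset.range p, bern.map (emb y j)

lemma nu_apply (p : ℕ) (y : ℤ → Bool) {E : Set (ℤ → Al)} (hE : MeasurableSet E) :
    nu p y E = (p : ENNReal)⁻¹ * ∑ j ∈ Finset.range p, bern (emb y j ⁻¹' E) := by
  simp only [nu, Measure.smul_apply, Measure.finsetSum_apply, smul_eq_mul]
  congr 1
  exact Finset.sum_congr rfl fun j _ => Measure.map_apply (measurable_emb y j) hE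

lemma nu_real (p : ℕ) (y : ℤ → Bool) {E : Set (ℤ → Al)} (hE : MeasurableSet E) :
    (nu p y).real E = (p : ℝ)⁻¹ * ∑ j ∈ Finset.range p, bern.real (emb y j ⁻¹' E) := by
  rw [Measure.real, nu_apply p y hE, ENNReal.toReal_mul,
    ENNReal.toReal_sum fun _ _ => measure_ne_top _ _]
  simp [Measure.real]

lemma nu_prob {p : ℕ} (hp : 0 < p) (y : ℤ → Bool) : IsProbabilityMeasure (nu p y) := by
  constructor
  rw [nu_apply p y MeasurableSet.univ]
  simp only [preimage_univ, measure_univ, Finset.sum_const, Finset.card_range, nsmul_eq_mul,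
    mul_one]
  exact ENNReal.inv_mul_cancel (by exact_mod_cast hp.ne') (ENNReal.natCast_ne_top p)

lemma measurable_shift : Measurable (shift : (ℤ → Al) → _) := measurable_tr 1

lemma shift_emb (y : ℤ → Bool) (j : ℕ) (x : ℤ → Bool) :
    shift (emb y j x) = emb y (j + 1) (tr 1 x) := by
  funext n
  simp only [shift, emb, tr]
  congr 2
  push_cast; ring

lemma emb_period {p : ℕ} {y : ℤ → Bool} (hy : ∀ n, y (n + p) = y n) : emb y p = emb y 0 := by
  funext x n
  simp [emb, hy]

lemma bern_preimage_emb (y : ℤ → Bool) (j : ℕ) {E : Set (ℤ → Al)} (hE : MeasurableSet E) :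
    bern (emb y j ⁻¹' (shift ⁻¹' E)) = bern (emb y (j + 1) ⁻¹' E) := by
  have : emb y j ⁻¹' (shift ⁻¹' E) = tr 1 ⁻¹' (emb y (j + 1) ⁻¹' E) := by
    ext x
    simp only [mem_preimage, shift_emb]
  rw [this, (tr_bern 1).measure_preimage (measurable_emb _ _ hE).nullMeasurableSet]

lemma nu_shift {p : ℕ} {y : ℤ → Bool} (hy : ∀ n, y (n + p) = y n) :
    MeasurePreserving shift (nu p y) (nu p y) := by
  refine ⟨measurable_shift, ?_⟩
  ext E hE
  rw [Measure.map_apply measurable_shift hE, nu_apply _ _ (measurable_shift hE), nu_apply _ _ hE]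
  congr 1
  simp only [bern_preimage_emb _ _ hE]
  have h1 := Finset.sum_range_succ (fun j => bern (emb y j ⁻¹' E)) p
  have h2 := Finset.sum_range_succ' (fun j => bern (emb y j ⁻¹' E)) p
  rw [emb_period hy, h2] at h1
  exact (ENNReal.add_left_inj (measure_ne_top _ _)).1 h1

lemma nu_ergodic {p : ℕ} (hp : 0 < p) {y : ℤ → Bool} (hy : ∀ n, y (n + p) = y n) :
    Ergodic shift (nu p y) := by
  refine ⟨nu_shift hy, ⟨fun E hE hinv => ?_⟩⟩
  have := nu_prob hp y
  have h1 : ∀ j : ℕ, tr (j : ℤ) ⁻¹' (emb y j ⁻¹' E) = emb y 0 ⁻¹' E := by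
    intro j
    induction j with
    | zero =>
      have : (tr ((0 : ℕ) : ℤ) : (ℤ → Bool) → _) = id := by funext x n; simp [tr]
      rw [this]; rfl
    | succ j ih =>
      rw [← ih]
      ext x
      have h2 : tr ((j + 1 : ℕ) : ℤ) x = tr 1 (tr (j : ℤ) x) := by
        funext n
        simp only [tr]
        congr 1
        push_cast; ring
      simp only [mem_preimage]
      rw [h2, ← shift_emb]
      conv_rhs => rw [← hinv]
      rfl
  have h2 : ∀ j : ℕ, bern.real (emb y j ⁻¹' E) = bern.real (emb y 0 ⁻¹' E) := by
    intro j
    rw [← h1 j]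
    exact ((tr_bern j).measureReal_preimage (measurable_emb _ _ hE).nullMeasurableSet).symm
  have h3 : (nu p y).real E = bern.real (emb y 0 ⁻¹' E) := by
    rw [nu_real _ _ hE]
    simp only [h2]
    have : (p : ℝ) ≠ 0 := by exact_mod_cast hp.ne'
    simp [this]
  have h4 := h1 p
  rw [emb_period hy] at h4
  rw [eventuallyConst_set']
  rcases bern_zero_one (measurable_emb y 0 hE) hp h4 with h5 | h5
  · left
    rw [h5] at h3
    rw [ae_eq_empty]
    exact (measureReal_eq_zero_iff).1 h3
  · right
    rw [h5] at h3
    rw [ae_eq_univ]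
    rw [prob_compl_eq_zero_iff hE]
    rw [Measure.real] at h3
    exact (ENNReal.toReal_eq_one_iff _).1 h3

/-- Words admissible for a periodic marker sequence. -/
def Lw (p : ℕ) (y : ℤ → Bool) (n : ℕ) : Finset (Fin n → Al) :=
  (Finset.univ : Finset (Fin p × (Fin n → Bool))).image
    fun q i => ⟨q.2 i, y (((i : ℕ) : ℤ) + (q.1 : ℕ))⟩

lemma card_Lw (p : ℕ) (y : ℤ → Bool) (n : ℕ) : ((Lw p y n).card : ℝ) ≤ p * 2 ^ n := by
  have : (Lw p y n).card ≤ p * 2 ^ n := by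
    refine Finset.card_image_le.trans ?_
    simp
  exact_mod_cast this

lemma mem_Lw (p : ℕ) (y : ℤ → Bool) (n : ℕ) (w : Fin n → Al) :
    w ∈ Lw p y n ↔ ∃ j : ℕ, j < p ∧ ∀ i : Fin n, (w i).2 = y (((i : ℕ) : ℤ) + j) := by
  simp only [Lw, Finset.mem_image, Finset.mem_univ, true_and]
  constructor
  · rintro ⟨⟨⟨j, hj⟩, q⟩, rfl⟩
    exact ⟨j, hj, fun i => rfl⟩
  · rintro ⟨j, hj, h⟩
    refine ⟨⟨⟨j, hj⟩, fun i => (w i).1⟩, ?_⟩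
    funext i
    ext
    · rfl
    · simp [h i]

lemma bern_emb_cyl_le (y : ℤ → Bool) (j n : ℕ) (w : Fin n → Al) :
    bern.real (emb y j ⁻¹' cylSet n w) ≤ 2⁻¹ ^ n := by
  have h := bern_cyl n 0 (fun i => (w i).1)
  have h2 : emb y j ⁻¹' cylSet n w ⊆ {x | ∀ i : Fin n, x ((i : ℕ) + 0) = (w i).1} := by
    intro x hx i
    have := hx i
    simp only [emb] at this
    rw [← this]; simp
  refine (measureReal_mono h2).trans (le_of_eq ?_)
  rw [Measure.real, h]
  simp

lemma nu_cyl_le {p : ℕ} (hp : 0 < p) (y : ℤ → Bool) (n : ℕ) (w : Fin n → Al) :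
    (nu p y).real (cylSet n w) ≤ 2⁻¹ ^ n := by
  rw [nu_real _ _ (measurableSet_cylSet n w)]
  have h := Finset.sum_le_sum fun j (_ : j ∈ Finset.range p) => bern_emb_cyl_le y j n w
  simp only [Finset.sum_const, Finset.card_range, nsmul_eq_mul] at h
  have hp' : (0 : ℝ) < p := by exact_mod_cast hp
  rw [inv_mul_le_iff₀ hp']
  exact h

lemma le_nu_cyl {p : ℕ} (y : ℤ → Bool) (n : ℕ) {w : Fin n → Al} (hw : w ∈ Lw p y n) :
    (p : ℝ)⁻¹ * 2⁻¹ ^ n ≤ (nu p y).real (cylSet n w) := by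
  rw [nu_real _ _ (measurableSet_cylSet n w)]
  obtain ⟨j, hj, h⟩ := (mem_Lw _ _ _ _).1 hw
  apply mul_le_mul_of_nonneg_left _ (by positivity)
  refine le_trans (le_of_eq ?_) (Finset.single_le_sum (f := fun j => bern.real (emb y j ⁻¹' cylSet n w))
    (fun _ _ => measureReal_nonneg) (Finset.mem_range.2 hj))
  have h2 : emb y j ⁻¹' cylSet n w = {x | ∀ i : Fin n, x ((i : ℕ) + 0) = (w i).1} := by
    ext x
    simp only [mem_preimage, cylSet, mem_ofPred_eq, emb, add_zero, Al.ext_iff, h]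
    simp
  rw [h2, Measure.real, bern_cyl n 0 (fun i => (w i).1)]
  simp

lemma nu_cyl_zero {p : ℕ} (y : ℤ → Bool) (n : ℕ) {w : Fin n → Al} (hw : w ∉ Lw p y n) :
    (nu p y).real (cylSet n w) = 0 := by
  rw [nu_real _ _ (measurableSet_cylSet n w)]
  rw [Finset.sum_eq_zero]
  · simp
  · intro j hj
    have : emb y j ⁻¹' cylSet n w = ∅ := by
      rw [eq_empty_iff_forall_notMem]
      intro x hx
      apply hw
      rw [mem_Lw]
      refine ⟨j, Finset.mem_range.1 hj, fun i => ?_⟩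
      rw [← hx i]; rfl
    rw [this]; simp

lemma KS_nu {p : ℕ} (hp : 0 < p) (y : ℤ → Bool) : KSEntropy (nu p y) = Real.log 2 := by
  have := nu_prob hp y
  have hp' : (0 : ℝ) < p := by exact_mod_cast hp
  apply le_antisymm
  · have hlim : Tendsto (fun n : ℕ => Real.log 2 + Real.log (2 * p) * (1 / ((n : ℝ) + 1))) atTop
        (nhds (Real.log 2)) := by
      simpa using tendsto_const_nhds (x := Real.log 2).add
        (tendsto_one_div_add_atTop_nhds_zero_nat.const_mul (Real.log (2 * p)))
    refine ge_of_tendsto' hlim fun n => (KS_le _ n).trans ?_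
    have h := blockEntropy_le (nu p y) (n + 1) (Lw p y (n + 1)) ∅ (fun w hw => nu_cyl_zero y _ hw)
      (p * 2 ^ (n + 1)) 1 (by positivity) one_pos (card_Lw _ _ _) (by simp)
    rw [Real.log_one, mul_zero, add_zero, ← mul_assoc, Real.log_mul (by positivity) (by positivity),
      Real.log_pow] at h
    rw [div_le_iff₀ (by positivity)]
    refine h.trans (le_of_eq ?_)
    push_cast
    field_simp
    ring
  · apply le_ciInf
    intro n
    rw [le_div_iff₀ (by positivity)]
    have := le_blockEntropy (nu p y) (n + 1) (fun w => nu_cyl_le hp y _ w)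
    push_cast at this
    linarith

/-! ### The periodic marker sequences and uniqueness -/

/-- Periodic marker sequences; `yy 0` has no marker. -/
def yy (p : ℕ) (n : ℤ) : Bool := decide (p ≠ 0 ∧ (p : ℤ) ∣ n)

/-- The period of `yy p`. -/
def per (p : ℕ) : ℕ := if p = 0 then 1 else p

lemma per_pos (p : ℕ) : 0 < per p := by
  unfold per; split <;> omega

lemma yy_per (p : ℕ) (n : ℤ) : yy p (n + per p) = yy p n := by
  unfold yy per
  by_cases hp : p = 0
  · simp [hp]
  · simp [hp]

lemma MY_yy (p : ℕ) : MY (yy p) := by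
  intro i d ⟨h1, h2, h3, h4⟩ k
  simp only [yy, decide_eq_true_eq, decide_eq_false_iff_not] at h2 h3 h4 ⊢
  obtain ⟨hp, hi⟩ := h2
  have hd : (p : ℤ) ∣ d := (dvd_add_right hi).1 h3.2
  have hd' : p ∣ d := by exact_mod_cast hd
  have hle : d ≤ p := by
    by_contra hlt
    exact h4 p (by omega) (by omega) ⟨hp, dvd_add hi dvd_rfl⟩
  have : d = p := le_antisymm hle (Nat.le_of_dvd h1 hd')
  subst this
  rw [dvd_add_right hi]
  simp only [hp, ne_eq, not_false_iff, true_and]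
  exact_mod_cast Iff.rfl

/-- Points with marker sequence in the orbit of `yy p`. -/
def ZZ (p : ℕ) : Set (ℤ → Al) := {x | ∃ j : ℕ, j < per p ∧ ∀ n, snd' x n = yy p (n + j)}

lemma mem_ZZ' (p : ℕ) (x : ℤ → Al) : x ∈ ZZ p ↔ ∃ c : ℤ, ∀ n, snd' x n = yy p (n + c) := by
  constructor
  · rintro ⟨j, _, h⟩
    exact ⟨j, h⟩
  · rintro ⟨c, h⟩
    have hpos : (0 : ℤ) < per p := by exact_mod_cast per_pos p
    have hmod := Int.emod_nonneg c hpos.ne'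
    have hlt := Int.emod_lt_of_pos c hpos
    refine ⟨(c % per p).toNat, by omega, fun n => ?_⟩
    rw [h n, Int.toNat_of_nonneg hmod]
    unfold yy
    by_cases hp : p = 0
    · simp [hp]
    · have hpe : per p = p := by simp [per, hp]
      rw [hpe]
      congr 2
      apply propext
      have : n + c = (n + c % (p : ℤ)) + p * (c / p) := by
        have := Int.emod_add_mul_ediv c p
        linarith
      rw [this, dvd_add_left (dvd_mul_right _ _)]

lemma measurableSet_snd (n : ℤ) (b : Bool) : MeasurableSet {x : ℤ → Al | snd' x n = b} := by
  have h : Measurable (fun x : ℤ → Al => x n) := measurable_pi_apply n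
  exact h (MeasurableSet.of_discrete (s := {a : Al | a.2 = b}))

lemma measurableSet_ZZ (p : ℕ) : MeasurableSet (ZZ p) := by
  have : ZZ p = ⋃ c : ℤ, ⋂ n : ℤ, {x : ℤ → Al | snd' x n = yy p (n + c)} := by
    ext x
    rw [mem_ZZ']
    simp
  rw [this]
  exact MeasurableSet.iUnion fun c => MeasurableSet.iInter fun n => measurableSet_snd _ _

lemma shift_ZZ (p : ℕ) : shift ⁻¹' ZZ p = ZZ p := by
  ext x
  rw [mem_preimage, mem_ZZ', mem_ZZ']
  constructor
  · rintro ⟨c, h⟩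
    refine ⟨c - 1, fun n => ?_⟩
    have := h (n - 1)
    simp only [snd', shift, sub_add_cancel] at this
    simp only [snd']
    rw [this]
    congr 1
    ring
  · rintro ⟨c, h⟩
    refine ⟨c + 1, fun n => ?_⟩
    have := h (n + 1)
    simp only [snd', shift] at this ⊢
    rw [this]
    congr 1
    ring

/-- Points whose first marker is at `k`. -/
def WW (k : ℤ) : Set (ℤ → Al) := {x | snd' x k = true ∧ ∀ n < k, snd' x n = false}

lemma measurableSet_WW (k : ℤ) : MeasurableSet (WW k) := by
  have : WW k = {x : ℤ → Al | snd' x k = true} ∩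
      ⋂ n : ℤ, ⋂ _ : n < k, {x : ℤ → Al | snd' x n = false} := by
    ext x
    simp [WW]
  rw [this]
  exact (measurableSet_snd _ _).inter
    (MeasurableSet.iInter fun n => MeasurableSet.iInter fun _ => measurableSet_snd _ _)

lemma shift_WW (k : ℤ) : shift ⁻¹' WW k = WW (k + 1) := by
  ext x
  simp only [WW, mem_preimage, mem_ofPred_eq, snd', shift]
  refine and_congr_right fun _ => ⟨fun h n hn => ?_, fun h n hn => h (n + 1) (by omega)⟩
  have := h (n - 1) (by omega)
  simpa using this

lemma disjoint_WW : Pairwise (Function.onFun Disjoint WW) := by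
  intro k l hkl
  simp only [Function.onFun]
  rw [Set.disjoint_left]
  rintro x ⟨h1, h2⟩ ⟨h3, h4⟩
  rcases lt_or_gt_of_ne hkl with h | h
  · rw [h4 k h] at h1; simp at h1
  · rw [h2 l h] at h3; simp at h3

lemma measure_WW (μ : Measure (ℤ → Al)) [IsProbabilityMeasure μ]
    (hμ : MeasurePreserving shift μ μ) (k : ℤ) : μ (WW k) = 0 := by
  have hs : ∀ k, μ (WW (k + 1)) = μ (WW k) := fun k => by
    rw [← shift_WW, hμ.measure_preimage (measurableSet_WW k).nullMeasurableSet]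
  have hc : ∀ n : ℕ, μ (WW (k + n)) = μ (WW k) := by
    intro n
    induction n with
    | zero => simp
    | succ n ih =>
      rw [← ih, ← hs (k + n)]
      congr 2
      push_cast; ring
  by_contra hne
  have hinj : Function.Injective (fun n : ℕ => k + (n : ℤ)) := fun a b h => by
    simpa using h
  have h2 := measure_iUnion (μ := μ) (f := fun n : ℕ => WW (k + n))
    (fun a b hab => disjoint_WW (hinj.ne hab)) (fun n => measurableSet_WW _)
  simp only [hc] at h2
  rw [ENNReal.tsum_const_eq_top_of_ne_zero hne] at h2
  exact measure_ne_top _ _ h2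

lemma XX_subset : XX ⊆ (⋃ k, WW k) ∪ ⋃ p, ZZ p := by
  intro x hx
  by_cases hW : x ∈ ⋃ k, WW k
  · exact Or.inl hW
  right
  rw [mem_iUnion]
  by_cases h0 : ∀ n, snd' x n = false
  · exact ⟨0, 0, per_pos 0, fun n => by rw [h0]; simp [yy]⟩
  push Not at h0
  obtain ⟨k0, hk0⟩ := h0
  simp only [ne_eq, Bool.not_eq_false] at hk0
  have hprev : ∀ k, snd' x k = true → ∃ n < k, snd' x n = true := by
    intro k hk
    by_contra hcon
    push Not at hcon
    apply hW
    rw [mem_iUnion]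
    exact ⟨k, hk, fun n hn => by simpa using hcon n hn⟩
  have hleft : ∀ m : ℕ, ∃ i, i ≤ k0 - m ∧ snd' x i = true := by
    intro m
    induction m with
    | zero => exact ⟨k0, by simp, hk0⟩
    | succ m ih =>
      obtain ⟨i, hi, h⟩ := ih
      obtain ⟨i', hi', h'⟩ := hprev i h
      exact ⟨i', by push_cast; omega, h'⟩
  obtain ⟨k1, hk1, hs1⟩ := hprev k0 hk0
  have e : k1 + ((k0 - k1).toNat : ℤ) = k0 := by omega
  obtain ⟨d, -, hc⟩ := exists_consec (s := snd' x) (i := k1) (k0 - k1).toNat (by omega) hs1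
    (by rw [e]; exact hk0)
  have hd0 : 0 < d := hc.1
  refine ⟨d, (mem_ZZ' _ _).2 ⟨-k1, fun n => ?_⟩⟩
  obtain ⟨i, hi, hsi⟩ := hleft ((k0 - n).toNat + (k0 - k1).toNat + 1)
  push_cast at hi
  have hin : i ≤ n := by omega
  have hik : i < k1 := by omega
  have e2 : i + ((k1 - i).toNat : ℤ) = k1 := by omega
  obtain ⟨d', -, hc'⟩ := exists_consec (s := snd' x) (i := i) (k1 - i).toNat (by omega) hsi
    (by rw [e2]; exact hs1)
  have hP := hx k1 d hc
  have hP' := hx i d' hc'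
  have hdk : d' ∣ (k1 - i).toNat := (hP' _).1 (by rw [e2]; exact hs1)
  have hdd : d ∣ d' := by
    apply (hP d').1
    have : k1 + (d' : ℤ) = i + (((k1 - i).toNat + d' : ℕ) : ℤ) := by push_cast; omega
    rw [this, hP']
    exact dvd_add hdk dvd_rfl
  have hdd' : d' ∣ d := by
    have h1 : snd' x (i + (((k1 - i).toNat + d : ℕ) : ℤ)) = true := by
      have : i + (((k1 - i).toNat + d : ℕ) : ℤ) = k1 + d := by push_cast; omega
      rw [this]
      exact (hP d).2 dvd_rfl
    exact (Nat.dvd_add_right hdk).1 ((hP' _).1 h1)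
  have : d' = d := Nat.dvd_antisymm hdd' hdd
  subst this
  have h1 := hP' (n - i).toNat
  have e3 : i + ((n - i).toNat : ℤ) = n := by omega
  rw [e3] at h1
  rw [Bool.eq_iff_iff, h1, yy, decide_eq_true_eq]
  have hdk' : (d' : ℤ) ∣ k1 - i := by
    have : (d' : ℤ) ∣ ((k1 - i).toNat : ℤ) := by exact_mod_cast hdk
    rwa [Int.toNat_of_nonneg (by omega)] at this
  have h2 : d' ∣ (n - i).toNat ↔ (d' : ℤ) ∣ n - i := by
    rw [← Int.natCast_dvd_natCast, Int.toNat_of_nonneg (by omega)]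
  rw [h2]
  have e4 : n - i = (n + -k1) + (k1 - i) := by ring
  rw [e4, dvd_add_left hdk']
  simp [hd0.ne']

lemma exists_ZZ (μ : Measure (ℤ → Al)) [IsProbabilityMeasure μ] (hμ : Ergodic shift μ)
    (hX : μ XXᶜ = 0) : ∃ p, μ (ZZ p)ᶜ = 0 := by
  by_contra hcon
  push Not at hcon
  have hz : ∀ p, μ (ZZ p) = 0 := fun p =>
    (hμ.measure_self_or_compl_eq_zero (measurableSet_ZZ p) (shift_ZZ p)).resolve_right (hcon p)
  have h1 : μ XX = 0 := by
    refine measure_mono_null XX_subset ?_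
    rw [measure_union_null_iff, measure_iUnion_null_iff, measure_iUnion_null_iff]
    exact ⟨measure_WW μ hμ.toMeasurePreserving, hz⟩
  have h2 : μ univ ≤ μ XX + μ XXᶜ := by
    rw [← union_compl_self XX]
    exact measure_union_le _ _
  rw [h1, hX, measure_univ] at h2
  simp at h2

lemma tr_preserving (μ : Measure (ℤ → Al)) (hμ : MeasurePreserving shift μ μ) (K : ℕ) :
    MeasurePreserving (tr (K : ℤ)) μ μ := by
  have := hμ.iterate K
  have h2 : (shift^[K] : (ℤ → Al) → _) = tr (K : ℤ) := by
    clear this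
    induction K with
    | zero => funext x n; simp [tr]
    | succ K ih =>
      funext x n
      rw [Function.iterate_succ_apply', ih]
      simp only [shift, tr]
      congr 1
      push_cast; ring
  rwa [h2] at this

lemma cyl_estimate (μ : Measure (ℤ → Al)) [IsProbabilityMeasure μ]
    (hμ : MeasurePreserving shift μ μ) (hKS : KSEntropy μ = Real.log 2) (p : ℕ)
    (hZ : μ (ZZ p)ᶜ = 0) (s : Finset ℤ) (S : Set (s → Al)) {δ : ℝ} (hδ : 0 < δ)
    (hν : (nu (per p) (yy p)).real (cylinder s S) ≤ δ) :
    μ.real (cylinder s S) * (-Real.log δ) ≤ Real.log (2 * per p) := by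
  classical
  have hpp := per_pos p
  have hp' : (0 : ℝ) < per p := by exact_mod_cast hpp
  have := nu_prob hpp (yy p)
  have hCm : MeasurableSet (cylinder s S : Set (ℤ → Al)) := MeasurableSet.cylinder s MeasurableSet.of_discrete
  obtain ⟨K, hK⟩ : ∃ K : ℕ, ∀ i ∈ s, i.natAbs ≤ K :=
    ⟨s.sup Int.natAbs, fun i hi => Finset.le_sup hi⟩
  set n : ℕ := 2 * K + 1 with hn
  let D : Finset (Fin n → Al) :=
    Finset.univ.filter fun w => ∃ x, tr (K : ℤ) x ∈ cylinder s S ∧ proj n x = w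
  have hD : proj n ⁻¹' (D : Set (Fin n → Al)) = tr (K : ℤ) ⁻¹' (cylinder s S) := by
    ext x
    simp only [mem_preimage, D, Finset.coe_filter, Finset.mem_univ, true_and, mem_ofPred_eq]
    constructor
    · rintro ⟨x', hx', he⟩
      have : s.restrict (tr (K : ℤ) x') = s.restrict (tr (K : ℤ) x) := by
        funext ⟨i, hi⟩
        have h1 := hK i hi
        have h2 := congrFun he ⟨(i + K).toNat, by omega⟩
        simp only [proj] at h2
        rw [Int.toNat_of_nonneg (by omega)] at h2
        exact h2
      rw [mem_cylinder] at hx' ⊢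
      rwa [← this]
    · intro hx
      exact ⟨x, hx, rfl⟩
  have hμD : μ.real (proj n ⁻¹' (D : Set (Fin n → Al))) = μ.real (cylinder s S) := by
    rw [hD]
    exact (tr_preserving μ hμ K).measureReal_preimage hCm.nullMeasurableSet
  have hνD : (nu (per p) (yy p)).real (proj n ⁻¹' (D : Set (Fin n → Al))) ≤ δ := by
    rw [hD, (tr_preserving _ (nu_shift (yy_per p)) K).measureReal_preimage hCm.nullMeasurableSet]
    exact hν
  have hcard : ((Lw (per p) (yy p) n ∩ D).card : ℝ) ≤ δ * (per p * 2 ^ n) := by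
    have h1 : ((Lw (per p) (yy p) n ∩ D).card : ℝ) * ((per p : ℝ)⁻¹ * 2⁻¹ ^ n) ≤ δ := by
      refine le_trans ?_ hνD
      rw [← sum_cyl, ← nsmul_eq_mul]
      refine (Finset.card_nsmul_le_sum _ _ _ fun w hw =>
        le_nu_cyl (yy p) n (Finset.mem_inter.1 hw).1).trans ?_
      exact Finset.sum_le_sum_of_subset_of_nonneg Finset.inter_subset_right
        fun _ _ _ => measureReal_nonneg
    rw [inv_pow, ← mul_inv, ← div_eq_mul_inv, div_le_iff₀ (by positivity)] at h1
    exact h1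
  have hL : ∀ w ∉ Lw (per p) (yy p) n, μ.real (cylSet n w) = 0 := by
    intro w hw
    rw [measureReal_eq_zero_iff]
    refine measure_mono_null ?_ hZ
    rintro x hx ⟨j, hj, h⟩
    apply hw
    rw [mem_Lw]
    refine ⟨j, hj, fun i => ?_⟩
    rw [← hx i, ← h]; rfl
  have hub := blockEntropy_le μ n _ D hL (per p * 2 ^ n) δ (by positivity) hδ (card_Lw _ _ _) hcard
  have hlb := KS_le μ (2 * K)
  rw [hKS, le_div_iff₀ (by positivity)] at hlb
  rw [hμD, ← mul_assoc, Real.log_mul (by positivity) (by positivity), Real.log_pow] at hub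
  rw [← hn] at hlb
  have hnc : (n : ℝ) = ((2 * K : ℕ) : ℝ) + 1 := by rw [hn]; push_cast; ring
  rw [hnc] at hub
  linarith

lemma absCont (μ : Measure (ℤ → Al)) [IsProbabilityMeasure μ]
    (hμ : MeasurePreserving shift μ μ) (hKS : KSEntropy μ = Real.log 2) (p : ℕ)
    (hZ : μ (ZZ p)ᶜ = 0) : μ ≪ nu (per p) (yy p) := by
  have hpp := per_pos p
  have hp1 : (1 : ℝ) ≤ per p := by exact_mod_cast hpp
  have := nu_prob hpp (yy p)
  set ν := nu (per p) (yy p) with hνdef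
  refine Measure.AbsolutelyContinuous.mk fun E hE hνE => ?_
  rw [← measureReal_eq_zero_iff (by finiteness)]
  by_contra hne
  have hm : 0 < μ.real E := lt_of_le_of_ne measureReal_nonneg (Ne.symm hne)
  set m := μ.real E with hmdef
  set Q := Real.log (2 * per p) with hQ
  have hQ0 : 0 ≤ Q := Real.log_nonneg (by linarith)
  set ε := min (m / 2) (Real.exp (-(2 / m * Q + 1))) with hε
  have hε0 : 0 < ε := lt_min (by linarith) (Real.exp_pos _)
  obtain ⟨s, S, hS, hC⟩ := exists_cylinder_approx (μ + ν) hE hε0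
  have hCm : MeasurableSet (cylinder s S : Set (ℤ → Al)) := MeasurableSet.cylinder s hS
  set C : Set (ℤ → Al) := cylinder s S with hCdef
  rw [measureReal_add_apply] at hC
  have p1 : 0 ≤ μ.real (symmDiff E C) := measureReal_nonneg
  have p2 : 0 ≤ ν.real (symmDiff E C) := measureReal_nonneg
  have h1 := abs_measureReal_sub_le_measureReal_symmDiff (μ := μ) hE.nullMeasurableSet
      hCm.nullMeasurableSet
  have h2 := abs_measureReal_sub_le_measureReal_symmDiff (μ := ν) hE.nullMeasurableSet
      hCm.nullMeasurableSet
  have hνE' : ν.real E = 0 := by rw [Measure.real, hνE]; simp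
  rw [hνE'] at h2
  rw [abs_le] at h1 h2
  have h3 := cyl_estimate μ hμ hKS p hZ s S hε0 (by rw [← hνdef, ← hCdef]; linarith [h2.1])
  rw [← hCdef, ← hQ] at h3
  have hεm : ε ≤ m / 2 := min_le_left _ _
  have h4 : m / 2 ≤ μ.real C := by linarith [h1.2]
  have h5 : 2 / m * Q + 1 ≤ -Real.log ε := by
    have := Real.log_le_log hε0 (min_le_right (m / 2) (Real.exp (-(2 / m * Q + 1))))
    rw [Real.log_exp] at this
    linarith
  have h6 : m / 2 * (2 / m * Q + 1) ≤ μ.real C * (-Real.log ε) :=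
    mul_le_mul h4 h5 (by positivity) measureReal_nonneg
  have h7 : m / 2 * (2 / m * Q + 1) = Q + m / 2 := by field_simp
  linarith

lemma emb_mem_ZZ (p j : ℕ) (x : ℤ → Bool) : emb (yy p) j x ∈ ZZ p :=
  (mem_ZZ' _ _).2 ⟨j, fun _ => rfl⟩

lemma nu_compl_of {p : ℕ} (q : ℕ) {E : Set (ℤ → Al)} (hE : MeasurableSet E) (h : ZZ p ⊆ E) :
    nu q (yy p) Eᶜ = 0 := by
  rw [nu_apply _ _ hE.compl, Finset.sum_eq_zero]
  · simp
  · intro j _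
    have : emb (yy p) j ⁻¹' Eᶜ = ∅ := by
      rw [eq_empty_iff_forall_notMem]
      intro x hx
      exact hx (h (emb_mem_ZZ p j x))
    rw [this]; simp

lemma ZZ_subset (p : ℕ) : ZZ p ⊆ XX := by
  intro x hx
  obtain ⟨c, h⟩ := (mem_ZZ' _ _).1 hx
  have : snd' x = fun n => yy p (n + c) := funext h
  change MY _
  rw [this]
  exact MY_translate (MY_yy p) c

lemma measurableSet_XX : MeasurableSet XX := by
  have hd : ∀ (i : ℤ) (d k : ℕ), MeasurableSet
      {x : ℤ → Al | Consec (snd' x) i d → (snd' x (i + k) = true ↔ d ∣ k)} := by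
    intro i d k
    have h1 : ∀ n b, Measurable fun x : ℤ → Al => snd' x n = b := fun n b =>
      measurableSet_setOfPred.1 (measurableSet_snd n b)
    unfold Consec
    refine measurableSet_setOfPred.2 ?_
    refine Measurable.imp ?_ ((h1 _ _).iff measurable_const)
    refine Measurable.and measurable_const ((h1 _ _).and ((h1 _ _).and ?_))
    refine Measurable.forall fun e => ?_
    exact measurable_const.imp (measurable_const.imp (h1 _ _))
  have : XX = ⋂ (i : ℤ) (d : ℕ) (k : ℕ),
      {x : ℤ → Al | Consec (snd' x) i d → (snd' x (i + k) = true ↔ d ∣ k)} := by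
    ext x
    simp only [XX, MY, mem_ofPred_eq, mem_iInter]
    exact ⟨fun h i d k hh => h i d hh k, fun h i d hh k => h i d k hh⟩
  rw [this]
  exact MeasurableSet.iInter fun i => MeasurableSet.iInter fun d => MeasurableSet.iInter fun k =>
    hd i d k

lemma nu_isMax (p : ℕ) : IsMaxMeasure XX (nu (per p) (yy p)) :=
  ⟨nu_prob (per_pos p) _, nu_compl_of _ measurableSet_XX (ZZ_subset p),
    nu_ergodic (per_pos p) (yy_per p), by rw [hTop_XX, KS_nu (per_pos p)]⟩

lemma isMax_eq {μ : Measure (ℤ → Al)} (h : IsMaxMeasure XX μ) :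
    ∃ p, nu (per p) (yy p) = μ := by
  obtain ⟨h1, h2, h3, h4⟩ := h
  rw [hTop_XX] at h4
  obtain ⟨p, hp⟩ := exists_ZZ μ h3 h2
  have := nu_prob (per_pos p) (yy p)
  exact ⟨p, ((nu_ergodic (per_pos p) (yy_per p)).eq_of_absolutelyContinuous h3.toMeasurePreserving
    (absCont μ h3.toMeasurePreserving h4 p hp)).symm⟩

lemma dvd_of_ZZ {p q : ℕ} {x : ℤ → Al} (hx : x ∈ ZZ p) (hx' : x ∈ ZZ q) : q ∣ p := by
  obtain ⟨c, h⟩ := (mem_ZZ' _ _).1 hx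
  obtain ⟨c', h'⟩ := (mem_ZZ' _ _).1 hx'
  by_cases hp : p = 0
  · simp [hp]
  have e : ∀ n : ℤ, (p : ℤ) ∣ n + c → (q : ℤ) ∣ n + c' := by
    intro n hn
    have h1 := (h n).symm.trans (h' n)
    rw [Bool.eq_iff_iff] at h1
    simp only [yy, decide_eq_true_eq] at h1
    exact (h1.1 ⟨hp, hn⟩).2
  have e1 := e (-c) (by simp)
  have e2 := e (-c + p) (by simp)
  have : (q : ℤ) ∣ p := by
    have := dvd_sub e2 e1
    have e3 : -c + (p : ℤ) + c' - (-c + c') = p := by ring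
    rwa [e3] at this
  exact_mod_cast this

lemma nu_injective : Function.Injective fun p => nu (per p) (yy p) := by
  intro p q h
  have h1 := nu_compl_of (p := p) (per p) (measurableSet_ZZ p) subset_rfl
  have h2 := nu_compl_of (p := q) (per q) (measurableSet_ZZ q) subset_rfl
  have h' : nu (per p) (yy p) = nu (per q) (yy q) := h
  rw [← h'] at h2
  have := nu_prob (per_pos p) (yy p)
  have hne : (ZZ p ∩ ZZ q).Nonempty := by
    by_contra hemp
    rw [not_nonempty_iff_eq_empty] at hemp
    have h3 : (nu (per p) (yy p)) univ = 0 := by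
      have : (univ : Set (ℤ → Al)) = (ZZ p)ᶜ ∪ (ZZ q)ᶜ := by
        rw [← compl_inter, hemp, compl_empty]
      rw [this]
      exact measure_union_null h1 h2
    rw [measure_univ] at h3
    exact one_ne_zero h3
  obtain ⟨x, hx, hx'⟩ := hne
  exact Nat.dvd_antisymm (dvd_of_ZZ hx' hx) (dvd_of_ZZ hx hx')

/-- There exists a weak-QFT subshift with countably
infinitely many maximum measures. -/
theorem weakQFT_with_infinitely_many_max_measures :
    ∃ (A : Type) (fA : Fintype A) (X : Set (ℤ → A)),
      (letI : TopologicalSpace A := ⊥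
       IsWeakQFT X) ∧
      (letI : Fintype A := fA
       letI : MeasurableSpace A := ⊤
       {μ : Measure (ℤ → A) | IsMaxMeasure X μ}.Countable ∧
       {μ : Measure (ℤ → A) | IsMaxMeasure X μ}.Infinite) := by
  refine ⟨Al, inferInstance, XX, isWeakQFT_XX, ?_, ?_⟩
  · refine (countable_range fun p => nu (per p) (yy p)).mono ?_
    intro μ hμ
    exact isMax_eq hμ
  · exact infinite_of_injective_forall_mem nu_injective nu_isMax

end QFTPaper
end

section
/- For every subshift Σ, the entropy of minimal forbidden words satisfies h_ℳ(Σ) ≤ h_𝒞(Σ), and there exists a subshift with h_ℳ(Σ) < h_𝒞(Σ). Moreover, both h_ℳ(Σ) > h*_𝒞(Σ) and h_ℳ(Σ) < h*_𝒞(Σ) occur for suitable subshifts Σ. -/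
open Filter Set MeasureTheory

namespace QFTPaper

variable {A : Type*} {B : Type*}

/-- The set of minimal forbidden words of length `n`: words not occurring in
`X` both of whose maximal proper subwords occur in `X`. -/
def MinForbidden (X : Set (ℤ → A)) (n : ℕ) : Set (List A) :=
  { w | w.length = n ∧ w ∉ Lang X n ∧
        w.dropLast ∈ Lang X (n - 1) ∧ w.tail ∈ Lang X (n - 1) }

/-- The entropy of minimal forbidden words `h_ℳ(X)`. -/
noncomputable def hM (X : Set (ℤ → A)) : ℝ :=
  limsup (fun n : ℕ =>
    max 0 (Real.log (Nat.card ↥(MinForbidden X n))) / (n : ℝ)) atTop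

/-! ### Helper lemmas -/

/-- The word `w` is read in `x` at the positions `0, 1, …`. -/
def At (x : ℤ → A) (w : List A) : Prop := ∀ (i : ℕ) (h : i < w.length), x (i : ℤ) = w[i]

theorem mem_Lang {X : Set (ℤ → A)} {n : ℕ} {w : List A} :
    w ∈ Lang X n ↔ w.length = n ∧ ∃ x ∈ X, At x w := by
  constructor
  · rintro ⟨h, x, hx, ho⟩
    refine ⟨h, x, hx, fun i hi => ?_⟩
    simpa using ho ⟨i, hi⟩
  · rintro ⟨h, x, hx, ho⟩
    refine ⟨h, x, hx, fun i => ?_⟩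
    simpa using ho i i.2

theorem mem_fol {X : Set (ℤ → A)} {w : List A} {y : ℕ → A} :
    y ∈ fol X w ↔ ∃ B ∈ X, At B w ∧ ∀ k : ℕ, y k = B ((w.length : ℤ) - 1 + (k : ℤ)) := by
  constructor
  · rintro ⟨B, hB, h1, h2⟩
    exact ⟨B, hB, fun i hi => by simpa using h1 ⟨i, hi⟩, h2⟩
  · rintro ⟨B, hB, h1, h2⟩
    exact ⟨B, hB, fun i => by simpa using h1 i i.2, h2⟩

theorem shift_mem {X : Set (ℤ → A)} (h : shift '' X = X) {x : ℤ → A} (hx : x ∈ X) :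
    (fun n => x (n + 1)) ∈ X := by
  rw [← h]; exact ⟨x, hx, rfl⟩

theorem fol_cons_subset {X : Set (ℤ → A)} (h : shift '' X = X) (c : A) (v : List A) :
    fol X (c :: v) ⊆ fol X v := by
  intro y hy
  obtain ⟨B, hB, h1, h2⟩ := mem_fol.1 hy
  refine mem_fol.2 ⟨_, shift_mem h hB, fun i hi => ?_, fun k => ?_⟩
  · have := h1 (i + 1) (by simpa using hi)
    simpa using this
  · rw [h2 k]
    congr 1
    push_cast [List.length_cons]
    ring

theorem finite_of_length {S : Set (List A)} [Finite A] {n : ℕ} (h : ∀ w ∈ S, w.length = n) :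
    S.Finite :=
  (List.finite_length_eq A n).subset h

theorem card_le_pow {S : Set (List A)} [Fintype A] {n : ℕ} (h : ∀ w ∈ S, w.length = n) :
    Nat.card S ≤ Fintype.card A ^ n := by
  have : Nat.card S ≤ Nat.card (List.Vector A n) :=
    Nat.card_le_card_of_injective (fun w : S => (⟨w.1, h w.1 w.2⟩ : List.Vector A n))
      (fun a b hab => by
        apply Subtype.ext
        have h2 := congrArg List.Vector.toList hab
        exact h2)
  simpa [Nat.card_eq_fintype_card, card_vector] using this

theorem log_card_le {S : Set (List A)} [Fintype A] {n : ℕ} (h : ∀ w ∈ S, w.length = n) :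
    Real.log (Nat.card S) ≤ n * Real.log (Fintype.card A) := by
  rcases Nat.eq_zero_or_pos (Nat.card S) with h0 | h0
  · rw [h0]
    simp only [Nat.cast_zero, Real.log_zero]
    exact mul_nonneg (Nat.cast_nonneg _) (Real.log_natCast_nonneg _)
  · rw [← Real.log_pow]
    apply Real.log_le_log (by exact_mod_cast h0)
    exact_mod_cast card_le_pow h

theorem log_card_div_le {S : Set (List A)} [Fintype A] {n : ℕ} (h : ∀ w ∈ S, w.length = n) :
    Real.log (Nat.card S) / n ≤ Real.log (Fintype.card A) := by
  have h1 := log_card_le h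
  have h2 := Real.log_natCast_nonneg (Fintype.card A)
  apply div_le_of_le_mul₀ (Nat.cast_nonneg _) h2
  linarith

theorem hM_eq (X : Set (ℤ → A)) :
    hM X = limsup (fun n : ℕ => Real.log (Nat.card ↥(MinForbidden X n)) / (n : ℝ)) atTop := by
  unfold hM
  congr 1
  funext n
  rw [max_eq_right (Real.log_natCast_nonneg _)]

theorem hC_eq (X : Set (ℤ → A)) :
    hC X = limsup (fun n : ℕ => Real.log (Nat.card ↥(LC X n)) / (n : ℝ)) atTop := by
  unfold hC
  congr 1
  funext n
  rw [max_eq_right (Real.log_natCast_nonneg _)]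

theorem bdd_seq [Fintype A] (S : ℕ → Set (List A)) (h : ∀ n, ∀ w ∈ S n, w.length = n) :
    IsBoundedUnder (· ≤ ·) atTop (fun n : ℕ => Real.log (Nat.card ↥(S n)) / (n : ℝ)) :=
  isBoundedUnder_of ⟨_, fun n => log_card_div_le (h n)⟩

theorem cobdd_seq (S : ℕ → Set (List A)) :
    IsCoboundedUnder (· ≤ ·) atTop (fun n : ℕ => Real.log (Nat.card ↥(S n)) / (n : ℝ)) :=
  IsBoundedUnder.isCoboundedUnder_le
    (isBoundedUnder_of ⟨0, fun n => div_nonneg (Real.log_natCast_nonneg _) (Nat.cast_nonneg _)⟩)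

theorem le_limsup_seq [Fintype A] (S : ℕ → Set (List A)) (h : ∀ n, ∀ w ∈ S n, w.length = n)
    (c : ℝ) (N : ℕ) (hc : ∀ n ≥ N, c * n ≤ Real.log (Nat.card ↥(S n))) :
    c ≤ limsup (fun n : ℕ => Real.log (Nat.card ↥(S n)) / (n : ℝ)) atTop := by
  apply le_limsup_of_frequently_le _ (bdd_seq S h)
  apply Eventually.frequently
  filter_upwards [eventually_ge_atTop N, eventually_gt_atTop 0] with n hn hn0
  rw [le_div_iff₀ (by exact_mod_cast hn0)]
  exact hc n hn

theorem limsup_seq_le (S : ℕ → Set (List A))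
    (c : ℝ) (N : ℕ) (hc : ∀ n ≥ N, Real.log (Nat.card ↥(S n)) ≤ c * n) :
    limsup (fun n : ℕ => Real.log (Nat.card ↥(S n)) / (n : ℝ)) atTop ≤ c := by
  apply limsup_le_of_le (cobdd_seq S)
  filter_upwards [eventually_ge_atTop N, eventually_gt_atTop 0] with n hn hn0
  rw [div_le_iff₀ (by exact_mod_cast hn0)]
  exact hc n hn

/-! ### The inequality `h_ℳ ≤ h_𝒞` -/

theorem minForbidden_dropLast {X : Set (ℤ → A)} (hX : shift '' X = X) {n : ℕ} {w : List A}
    (hw : w ∈ MinForbidden X (n + 2)) : w.dropLast ∈ LC X (n + 1) := by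
  obtain ⟨hl, hnot, hd, ht⟩ := hw
  obtain ⟨c, v, rfl⟩ : ∃ c v, w = c :: v := by
    cases w with
    | nil => simp at hl
    | cons c v => exact ⟨c, v, rfl⟩
  have hvl : v.length = n + 1 := by simpa using hl
  have hvne : v ≠ [] := by rintro rfl; simp at hvl
  have hdl : (c :: v).dropLast = c :: v.dropLast := List.dropLast_cons_of_ne_nil hvne
  rw [hdl] at hd ⊢
  obtain ⟨-, x, hx, hxa⟩ := mem_Lang.1 hd
  obtain ⟨-, z, hz, hza⟩ := mem_Lang.1 ht
  simp only [List.tail_cons] at hza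
  have hdv : v.dropLast.length = n := by simp [hvl]
  refine ⟨by simp [hvl], by simp, ?_, ?_⟩
  · rw [← Set.nonempty_iff_ne_empty]
    exact ⟨_, mem_fol.2 ⟨x, hx, hxa, fun k => rfl⟩⟩
  · refine ⟨fol_cons_subset hX _ _, fun hsub => hnot ?_⟩
    simp only [List.tail_cons] at hsub
    have hy : (fun k : ℕ => z ((v.dropLast.length : ℤ) - 1 + (k : ℤ))) ∈ fol X v.dropLast :=
      mem_fol.2 ⟨z, hz, fun i hi => by
        rw [hza i (by simp at hi; omega)]; simp, fun k => rfl⟩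
    obtain ⟨B, hB, h1, h2⟩ := mem_fol.1 (hsub hy)
    refine mem_Lang.2 ⟨hl, B, hB, fun i hi => ?_⟩
    simp only [List.length_cons] at hi
    by_cases hin : i < n + 1
    · rw [h1 i (by simp [hdv]; omega)]
      cases i with
      | zero => simp
      | succ i => simp
    · obtain rfl : i = n + 1 := by omega
      have := h2 1
      simp only [List.length_cons, hdv] at this
      have e : ((n + 1 : ℕ) : ℤ) - 1 + ((1 : ℕ) : ℤ) = ((n + 1 : ℕ) : ℤ) := by push_cast; ring
      have e2 : (n : ℤ) - 1 + ((1 : ℕ) : ℤ) = (n : ℤ) := by push_cast; ring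
      rw [e, e2] at this
      rw [← this, hza n (by omega)]
      simp

theorem card_minForbidden_le [Fintype A] {X : Set (ℤ → A)} (hX : shift '' X = X) (n : ℕ) :
    Nat.card (MinForbidden X (n + 2)) ≤ Fintype.card A * Nat.card (LC X (n + 1)) := by
  have hf : Finite (LC X (n + 1)) :=
    (finite_of_length (n := n + 1) (fun w hw => hw.1)).to_subtype
  have hne : ∀ w ∈ MinForbidden X (n + 2), w ≠ [] := by
    rintro w hw rfl
    simpa using hw.1
  have := Nat.card_le_card_of_injective
    (fun w : MinForbidden X (n + 2) =>
      ((w.1.getLast (hne w.1 w.2), ⟨w.1.dropLast, minForbidden_dropLast hX w.2⟩) :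
        A × LC X (n + 1))) (by
      intro a b hab
      simp only [Prod.mk.injEq, Subtype.mk.injEq] at hab
      apply Subtype.ext
      rw [← List.dropLast_append_getLast (hne a.1 a.2),
        ← List.dropLast_append_getLast (hne b.1 b.2), hab.1, hab.2])
  simpa [Nat.card_prod, Nat.card_eq_fintype_card] using this

theorem hM_le_hC [Fintype A] {X : Set (ℤ → A)} (hX : shift '' X = X) : hM X ≤ hC X := by
  rw [hM_eq]
  apply le_of_forall_pos_le_add
  intro ε hε
  have hb : IsBoundedUnder (· ≤ ·) atTop
      (fun n : ℕ => Real.log (Nat.card ↥(LC X n)) / (n : ℝ)) :=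
    bdd_seq (LC X) (fun n w hw => hw.1)
  have hev : ∀ᶠ n : ℕ in atTop, Real.log (Nat.card ↥(LC X n)) / (n : ℝ) < hC X + ε / 2 :=
    eventually_lt_of_limsup_lt (by rw [← hC_eq]; linarith) hb
  obtain ⟨N, hN⟩ := eventually_atTop.1 hev
  have hC0 : 0 ≤ hC X + ε / 2 := by
    refine le_trans ?_ (hN N le_rfl).le
    exact div_nonneg (Real.log_natCast_nonneg _) (Nat.cast_nonneg _)
  obtain ⟨M, hM⟩ := exists_nat_gt (Real.log (Fintype.card A) / (ε / 2))
  have hL := Real.log_natCast_nonneg (Fintype.card A)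
  apply limsup_seq_le (MinForbidden X) _ (N + M + 2)
  intro n hn
  obtain ⟨k, rfl⟩ : ∃ k, n = k + 2 := ⟨n - 2, by omega⟩
  have h1 := hN (k + 1) (by omega)
  rw [div_lt_iff₀ (by positivity)] at h1
  have hMk : (M : ℝ) ≤ k := by exact_mod_cast (by omega : M ≤ k)
  have h2 : Real.log (Fintype.card A) ≤ ε / 2 * k := by
    rw [div_lt_iff₀ (by positivity)] at hM
    nlinarith
  have h3 : Real.log (Nat.card (MinForbidden X (k + 2))) ≤
      Real.log (Fintype.card A) + Real.log (Nat.card (LC X (k + 1))) := by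
    have hc := card_minForbidden_le hX k
    rcases Nat.eq_zero_or_pos (Nat.card (MinForbidden X (k + 2))) with h0 | h0
    · rw [h0]
      simp only [Nat.cast_zero, Real.log_zero]
      exact add_nonneg hL (Real.log_natCast_nonneg _)
    · have hp : 0 < Fintype.card A * Nat.card (LC X (k + 1)) := lt_of_lt_of_le h0 hc
      have hp1 := Nat.pos_of_mul_pos_right hp
      have hp2 := Nat.pos_of_mul_pos_left hp
      rw [← Real.log_mul (by positivity) (by positivity)]
      apply Real.log_le_log (by exact_mod_cast h0)
      exact_mod_cast hc
  push_cast at h1 ⊢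
  nlinarith

/-! ### Generalities for the examples -/

theorem isClosed_forb {ι : Type*} [TopologicalSpace A] [DiscreteTopology A]
    (p : ι → Finset (ℤ × A)) :
    IsClosed {x : ℤ → A | ∀ i, ¬ ∀ q ∈ p i, x q.1 = q.2} := by
  simp only [Set.ofPred_forall]
  refine isClosed_iInter fun i => ?_
  rw [← isOpen_compl_iff]
  have : {x : ℤ → A | ¬ ∀ q ∈ p i, x q.1 = q.2}ᶜ = ⋂ q ∈ p i, {x : ℤ → A | x q.1 = q.2} := by
    ext x; simp
  rw [this]
  refine isOpen_biInter_finset fun q _ => ?_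
  have hc : Continuous fun x : ℤ → A => x q.1 := continuous_apply q.1
  exact (isOpen_discrete ({q.2} : Set A)).preimage hc

theorem shift_image {X : Set (ℤ → A)} (h : ∀ x ∈ X, ∀ k : ℤ, (fun n => x (n + k)) ∈ X) :
    shift '' X = X := by
  ext x
  constructor
  · rintro ⟨y, hy, rfl⟩
    exact h y hy 1
  · intro hx
    refine ⟨_, h x hx (-1), ?_⟩
    funext n
    simp [shift]

/-- The word `w` at positions `0, 1, …`, padded by `0`. -/
def seqOf {m : ℕ} (w : List (Fin (m + 1))) : ℤ → Fin (m + 1) :=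
  fun k => if 0 ≤ k then w.getD k.toNat 0 else 0

theorem seqOf_nat {m : ℕ} (w : List (Fin (m + 1))) (i : ℕ) : seqOf w (i : ℤ) = w.getD i 0 := by
  simp [seqOf]

theorem At_seqOf {m : ℕ} (w : List (Fin (m + 1))) : At (seqOf w) w := by
  intro i hi
  rw [seqOf_nat, List.getD_eq_getElem _ _ hi]

theorem seqOf_ne {m : ℕ} {w : List (Fin (m + 1))} {k : ℤ} {c : Fin (m + 1)} (hc : c ≠ 0)
    (h : seqOf w k = c) : ∃ (i : ℕ) (hi : i < w.length), k = i ∧ w[i] = c := by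
  by_cases hk : 0 ≤ k
  · obtain ⟨i, rfl⟩ := Int.eq_ofNat_of_zero_le hk
    rw [seqOf_nat] at h
    by_cases hi : i < w.length
    · rw [List.getD_eq_getElem _ _ hi] at h
      exact ⟨i, hi, rfl, h⟩
    · rw [List.getD_eq_default _ _ (by omega)] at h
      exact absurd h.symm hc
  · simp [seqOf, hk] at h
    exact absurd h.symm hc

theorem wordOf_cons (b : ℕ → A) (m : ℕ) :
    wordOf b m = b m :: (List.range m).map (fun j => b (m - (j + 1))) := by
  simp [wordOf, List.range_succ_eq_map, Function.comp_def]

/-- A word over `{0, 1}` from a Boolean function. -/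
def bw {m n : ℕ} (f : Fin n → Bool) : List (Fin (m + 3)) :=
  List.ofFn fun i => if f i then 1 else 0

theorem bw_inj {m n : ℕ} : Function.Injective (bw (m := m) (n := n)) := by
  intro f g h
  have := List.ofFn_injective h
  funext i
  have := congrFun this i
  by_cases hf : f i <;> by_cases hg : g i <;> simp_all

theorem bw_mem {m n : ℕ} {f : Fin n → Bool} {c : Fin (m + 3)} (h : c ∈ bw f) : c = 1 ∨ c = 0 := by
  simp only [bw, List.mem_ofFn'] at h
  obtain ⟨i, rfl⟩ := h
  by_cases hf : f i <;> simp [hf]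

theorem bw_length {m n : ℕ} (f : Fin n → Bool) : (bw (m := m) f).length = n := by simp [bw]

theorem pow_le_card {m n k : ℕ} {S : Set (List (Fin (m + 3)))} (hS : ∀ w ∈ S, w.length = k)
    (g : List (Fin (m + 3)) → List (Fin (m + 3))) (hg : Function.Injective g)
    (h : ∀ f : Fin n → Bool, g (bw f) ∈ S) : 2 ^ n ≤ Nat.card S := by
  have : Finite S := (finite_of_length hS).to_subtype
  have := Nat.card_le_card_of_injective (fun f : Fin n → Bool => (⟨g (bw f), h f⟩ : S))
    (fun a b hab => bw_inj (hg (congrArg Subtype.val hab)))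
  simpa using this

theorem log_lower {n k : ℕ} (h : 2 ^ n ≤ k) : (0.69 : ℝ) * n ≤ Real.log k := by
  have h1 : Real.log ((2 : ℝ) ^ n) ≤ Real.log k := by
    apply Real.log_le_log (by positivity)
    exact_mod_cast h
  rw [Real.log_pow] at h1
  have := Real.log_two_gt_d9
  have hn : (0 : ℝ) ≤ n := Nat.cast_nonneg n
  nlinarith

/-! ### The example with `h*_𝒞 < h_ℳ` -/

/-- Sequences over four letters where no `2` is ever followed later by a `3`. -/
def X3 : Set (ℤ → Fin 4) := {x | ∀ i j : ℤ, i < j → x i = 2 → x j ≠ 3}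

theorem X3_shift : shift '' X3 = X3 := by
  apply shift_image
  intro x hx k i j hij
  exact hx _ _ (by omega)

theorem X3_closed : @IsClosed (ℤ → Fin 4) (@Pi.topologicalSpace _ _ fun _ => ⊥) X3 := by
  let _ : TopologicalSpace (Fin 4) := ⊥
  have _ : DiscreteTopology (Fin 4) := ⟨rfl⟩
  convert isClosed_forb (A := Fin 4)
    (fun p : {p : ℤ × ℤ // p.1 < p.2} => {((p.1.1, 2) : ℤ × Fin 4), (p.1.2, 3)}) using 1
  ext x
  simp [X3]

theorem X3_constraint {c : Fin 4} {v : List (Fin 4)} (hv : v ≠ [])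
    (h : IsLeftConstraint X3 (c :: v)) : c = 2 ∧ (2 : Fin 4) ∉ v := by
  by_contra hcon
  obtain ⟨-, hne, hss⟩ := h
  rw [← Set.nonempty_iff_ne_empty] at hne
  obtain ⟨_, hy0⟩ := hne
  obtain ⟨B0, hB0, hA0, -⟩ := mem_fol.1 hy0
  apply hss.2
  intro y hy
  simp only [List.tail_cons] at hy
  obtain ⟨B1, hB1, hA1, hy1⟩ := mem_fol.1 hy
  have hlen : 0 < v.length := List.length_pos_iff.2 hv
  refine mem_fol.2 ⟨fun k => if k = 0 then c else if 1 ≤ k then B1 (k - 1) else 0, ?_, ?_, ?_⟩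
  · intro i j hij hi hj
    beta_reduce at hi hj
    by_cases hi0 : i = 0
    · subst hi0
      simp only [if_true] at hi
      have h2v : (2 : Fin 4) ∈ v := by
        by_contra h2
        exact hcon ⟨hi, h2⟩
      obtain ⟨p, hp, hpv⟩ := List.getElem_of_mem h2v
      rw [if_neg (by omega), if_pos (by omega)] at hj
      have hBp : B1 p = 2 := by rw [hA1 p hp, hpv]
      have hjp : ¬ ((p : ℤ) < j - 1) := fun hlt => hB1 _ _ hlt hBp hj
      obtain ⟨q, rfl⟩ : ∃ q : ℕ, j = q + 1 := ⟨(j - 1).toNat, by omega⟩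
      have hq : q < v.length := by omega
      have e1 := hA0 (q + 1) (by simpa using hq)
      have e0 := hA0 0 (by simp)
      simp only [List.getElem_cons_succ, Nat.cast_add, Nat.cast_one] at e1
      have e2 := hA1 q hq
      rw [add_sub_cancel_right, e2] at hj
      refine hB0 0 (q + 1) (by omega) ?_ (e1.trans hj)
      simpa [hi] using e0
    · by_cases hi1 : 1 ≤ i
      · rw [if_neg hi0, if_pos hi1] at hi
        rw [if_neg (by omega), if_pos (by omega)] at hj
        exact hB1 _ _ (by omega) hi hj
      · rw [if_neg hi0, if_neg hi1] at hi
        exact absurd hi (by decide)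
  · intro i hi
    cases i with
    | zero => simp
    | succ i =>
      simp only [List.getElem_cons_succ]
      rw [if_neg (by omega), if_pos (by omega), ← hA1 i (by simpa using hi)]
      congr 1
      push_cast; ring
  · intro k
    rw [hy1 k]
    simp only [List.length_cons]
    rw [if_neg (by omega), if_pos (by omega)]
    congr 1
    push_cast; ring

theorem X3_ELC (n : ℕ) : ELC X3 n = ∅ := by
  ext w
  simp only [Set.mem_empty_iff_false, iff_false]
  rintro ⟨-, -, b, -, hb⟩
  obtain ⟨m, hm, h1⟩ := hb 1
  obtain ⟨m', hm', h2⟩ := hb (m + 1)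
  rw [wordOf_cons] at h1 h2
  obtain ⟨e1, -⟩ := X3_constraint (by simp; omega) h1
  obtain ⟨-, e2⟩ := X3_constraint (by simp; omega) h2
  apply e2
  rw [List.mem_map]
  exact ⟨m' - (m + 1), by simp; omega, by rw [← e1]; congr 1; omega⟩

theorem X3_hCstar : hCstar X3 = 0 := by
  simp [hCstar, X3_ELC]

theorem X3_minForbidden {n : ℕ} (u : List (Fin 4)) (hu : u.length = n)
    (h : ∀ c ∈ u, c = 1 ∨ c = 0) : (2 :: (u ++ [3])) ∈ MinForbidden X3 (n + 2) := by
  refine ⟨by simp [hu], ?_, ?_, ?_⟩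
  · intro hm
    obtain ⟨-, x, hx, hA⟩ := mem_Lang.1 hm
    have h0 := hA 0 (by simp)
    have h1 := hA (n + 1) (by simp [hu])
    refine hx 0 ((n + 1 : ℕ) : ℤ) (by omega) (by simpa using h0) ?_
    rw [h1]
    simp [hu]
  · have e : (2 :: (u ++ [3]) : List (Fin 4)).dropLast = 2 :: u := by
      rw [← List.cons_append, List.dropLast_concat]
    rw [e]
    refine mem_Lang.2 ⟨by simp [hu], seqOf (m := 3) (2 :: u), ?_, At_seqOf (m := 3) _⟩
    intro i j _ _ hj
    obtain ⟨k, hk, -, hk3⟩ := seqOf_ne (m := 3) (by decide) hj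
    have : (3 : Fin 4) ∈ (2 :: u : List (Fin 4)) := hk3 ▸ List.getElem_mem hk
    rcases List.mem_cons.1 this with h3 | h3
    · exact absurd h3 (by decide)
    · rcases h _ h3 with h4 | h4 <;> exact absurd h4 (by decide)
  · refine mem_Lang.2 ⟨by simp [hu], seqOf (m := 3) (u ++ [3]), ?_, At_seqOf (m := 3) _⟩
    intro i j _ hi _
    obtain ⟨k, hk, -, hk3⟩ := seqOf_ne (m := 3) (by decide) hi
    have : (2 : Fin 4) ∈ (u ++ [3] : List (Fin 4)) := hk3 ▸ List.getElem_mem hk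
    rcases List.mem_append.1 this with h3 | h3
    · rcases h _ h3 with h4 | h4 <;> exact absurd h4 (by decide)
    · exact absurd (List.mem_singleton.1 h3) (by decide)

theorem X3_hM : 1 / 3 ≤ hM X3 := by
  rw [hM_eq]
  apply le_limsup_seq (MinForbidden X3) (fun n w hw => hw.1) _ 4
  intro n hn
  obtain ⟨k, rfl⟩ : ∃ k, n = k + 2 := ⟨n - 2, by omega⟩
  have := log_lower (pow_le_card (m := 1) (n := k) (k := k + 2) (S := MinForbidden X3 (k + 2))
    (fun w hw => hw.1) (fun u => 2 :: (u ++ [3])) (fun a b hab => by simpa using hab)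
    (fun f => X3_minForbidden _ (bw_length f) (fun c hc => bw_mem hc)))
  have hk : (2 : ℝ) ≤ k := by exact_mod_cast (by omega : 2 ≤ k)
  push_cast
  linarith

/-! ### The example with `h_ℳ < h*_𝒞` -/

/-- Sequences over three letters avoiding `1 u 0^{n^2} 2` for all `n` and all words `u` of
length `n`. -/
def X4 : Set (ℤ → Fin 3) :=
  {x | ∀ (i : ℤ) (n : ℕ), x i = 1 → (∀ j : ℕ, j < n ^ 2 → x (i + 1 + n + j) = 0) →
    x (i + 1 + n + (n ^ 2 : ℕ)) ≠ 2}

theorem X4_shift : shift '' X4 = X4 := by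
  apply shift_image
  intro x hx k i n h1 h2 h3
  refine hx (i + k) n h1 (fun j hj => ?_) ?_
  · rw [← h2 j hj]
    congr 1
    ring
  · rw [← h3]
    congr 1
    ring

theorem X4_closed : @IsClosed (ℤ → Fin 3) (@Pi.topologicalSpace _ _ fun _ => ⊥) X4 := by
  let _ : TopologicalSpace (Fin 3) := ⊥
  have _ : DiscreteTopology (Fin 3) := ⟨rfl⟩
  convert isClosed_forb (A := Fin 3)
    (fun p : ℤ × ℕ => insert ((p.1, 1) : ℤ × Fin 3)
      (insert (p.1 + 1 + p.2 + (p.2 ^ 2 : ℕ), 2)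
        ((Finset.range (p.2 ^ 2)).image fun j : ℕ => (p.1 + 1 + p.2 + j, 0)))) using 1
  ext x
  simp only [X4, Set.mem_ofPred_eq, Prod.forall, Finset.mem_insert, Finset.mem_image,
    Finset.mem_range]
  refine forall_congr' fun i => forall_congr' fun n => ?_
  constructor
  · intro h hq
    refine h (hq _ _ (Or.inl rfl)) (fun j hj => hq _ _ (Or.inr (Or.inr ⟨j, hj, rfl⟩)))
      (hq _ _ (Or.inr (Or.inl rfl)))
  · intro h h1 h2 h3
    apply h
    rintro a c (h | h | ⟨j, hj, h⟩)
    · obtain ⟨rfl, rfl⟩ := Prod.mk.inj h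
      exact h1
    · obtain ⟨rfl, rfl⟩ := Prod.mk.inj h
      exact h3
    · obtain ⟨rfl, rfl⟩ := Prod.mk.inj h
      exact h2 j hj

theorem X4_constraint {w : List (Fin 3)} (hw : w ≠ []) (h2 : (2 : Fin 3) ∉ w) :
    IsLeftConstraint X4 (1 :: w) := by
  have hlen : 0 < w.length := List.length_pos_iff.2 hw
  refine ⟨by simp, ?_, fol_cons_subset X4_shift _ _, ?_⟩
  · rw [← Set.nonempty_iff_ne_empty]
    refine ⟨_, mem_fol.2 ⟨seqOf (m := 2) (1 :: w), ?_, At_seqOf (m := 2) _, fun k => rfl⟩⟩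
    intro i n _ _ h3
    obtain ⟨k, hk, -, hk3⟩ := seqOf_ne (m := 2) (by decide) h3
    have : (2 : Fin 3) ∈ (1 :: w : List (Fin 3)) := hk3 ▸ List.getElem_mem hk
    rcases List.mem_cons.1 this with h3 | h3
    · exact absurd h3 (by decide)
    · exact h2 h3
  · simp only [List.tail_cons]
    intro hsub
    obtain ⟨n, hn⟩ : ∃ n, n = w.length := ⟨_, rfl⟩
    let B : ℤ → Fin 3 := fun k => if k = n + (n ^ 2 : ℕ) then 2 else seqOf (m := 2) w k
    have hB : B ∈ X4 := by
      intro i m hi _ h3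
      have hi' : ∃ p : ℕ, p < n ∧ i = p := by
        simp only [B] at hi
        split_ifs at hi with hc
        · exact absurd hi (by decide)
        · obtain ⟨k, hk, hk1, -⟩ := seqOf_ne (m := 2) (by decide) hi
          exact ⟨k, by omega, hk1⟩
      obtain ⟨p, hp, rfl⟩ := hi'
      have h3' : p + 1 + m + m ^ 2 = n + n ^ 2 := by
        simp only [B] at h3
        split_ifs at h3 with hc
        · exact_mod_cast hc
        · obtain ⟨k, hk, -, hk3⟩ := seqOf_ne (m := 2) (by decide) h3
          exact absurd (hk3 ▸ List.getElem_mem hk) h2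
      rcases lt_or_ge m n with hmn | hmn
      · nlinarith
      · nlinarith
    have hy : (fun k : ℕ => B ((w.length : ℤ) - 1 + (k : ℤ))) ∈ fol X4 w := by
      refine mem_fol.2 ⟨B, hB, fun i hi => ?_, fun k => rfl⟩
      simp only [B]
      rw [if_neg (by push_cast; nlinarith), At_seqOf (m := 2) w i hi]
    obtain ⟨B', hB', hA', hy'⟩ := mem_fol.1 (hsub hy)
    simp only [List.length_cons, ← hn] at hy'
    refine hB' 0 n (hA' 0 (by simp)) (fun j hj => ?_) ?_
    · have := hy' (j + 1)
      have e1 : ((n + 1 : ℕ) : ℤ) - 1 + ((j + 1 : ℕ) : ℤ) = 0 + 1 + n + j := by push_cast; ring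
      have e2 : (n : ℤ) - 1 + ((j + 1 : ℕ) : ℤ) = ((n + j : ℕ) : ℤ) := by push_cast; ring
      rw [e1, e2] at this
      rw [← this]
      simp only [B]
      rw [if_neg (by push_cast at hj ⊢; zify at hj; omega), seqOf_nat,
        List.getD_eq_default _ _ (by omega)]
    · have := hy' (n ^ 2 + 1)
      have e1 : ((n + 1 : ℕ) : ℤ) - 1 + ((n ^ 2 + 1 : ℕ) : ℤ) = 0 + 1 + n + (n ^ 2 : ℕ) := by
        push_cast; ring
      have e2 : (n : ℤ) - 1 + ((n ^ 2 + 1 : ℕ) : ℤ) = n + (n ^ 2 : ℕ) := by push_cast; ring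
      rw [e1, e2] at this
      rw [← this]
      simp [B]

theorem X4_extendable {n : ℕ} (hn : 0 < n) (u : List (Fin 3)) (hu : u.length = n)
    (h : ∀ c ∈ u, c = 1 ∨ c = 0) : (1 :: u) ∈ ELC X4 (n + 1) := by
  have hune : u ≠ [] := by rintro rfl; simp at hu; omega
  refine ⟨by simp [hu], X4_constraint hune ?_, fun j => (1 :: u).reverse.getD j 1, ?_, ?_⟩
  · intro h2
    rcases h _ h2 with h4 | h4 <;> exact absurd h4 (by decide)
  · apply List.ext_getElem
    · simp [wordOf]
    · intro i hi1 hi2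
      simp only [wordOf, List.getElem_map, List.getElem_range]
      simp only [List.length_cons] at hi2
      rw [List.getD_eq_getElem _ _ (by simp), List.getElem_reverse]
      congr 1
      simp only [List.length_cons]
      omega
  · intro N
    refine ⟨N + n + 1, by omega, ?_⟩
    rw [wordOf_cons, List.getD_eq_default _ _ (by simp [hu])]
    apply X4_constraint (by simp)
    intro h2
    obtain ⟨j, -, hj⟩ := List.mem_map.1 h2
    by_cases hl : N + n + 1 - (j + 1) < (1 :: u : List (Fin 3)).reverse.length
    · rw [List.getD_eq_getElem _ _ hl] at hj
      have hm := List.getElem_mem hl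
      rw [hj, List.mem_reverse] at hm
      rcases List.mem_cons.1 hm with h3 | h3
      · exact absurd h3 (by decide)
      · rcases h _ h3 with h4 | h4 <;> exact absurd h4 (by decide)
    · rw [List.getD_eq_default _ _ (by omega)] at hj
      exact absurd hj (by decide)

theorem X4_hCstar : 1 / 3 ≤ hCstar X4 := by
  apply le_limsup_seq (ELC X4) (fun n w hw => hw.1) _ 2
  intro n hn
  obtain ⟨k, rfl⟩ : ∃ k, n = k + 1 := ⟨n - 1, by omega⟩
  have := log_lower (pow_le_card (m := 0) (n := k) (k := k + 1) (S := ELC X4 (k + 1))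
    (fun w hw => hw.1) (fun u => 1 :: u) (fun a b hab => by simpa using hab)
    (fun f => X4_extendable (by omega) _ (bw_length f) (fun c hc => bw_mem hc)))
  have hk : (1 : ℝ) ≤ k := by exact_mod_cast (by omega : 1 ≤ k)
  push_cast
  linarith

theorem X4_minForbidden {N : ℕ} {w : List (Fin 3)} (hw : w ∈ MinForbidden X4 N) :
    ∃ n : ℕ, N = n ^ 2 + n + 2 ∧ w[n ^ 2 + n + 1]? = some 2 ∧
      ∀ j < n ^ 2, w[n + 1 + j]? = some 0 := by
  obtain ⟨hl, hnot, hd, ht⟩ := hw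
  obtain ⟨-, xd, hxd, hAd⟩ := mem_Lang.1 hd
  obtain ⟨-, xt, hxt, hAt⟩ := mem_Lang.1 ht
  have hns : seqOf (m := 2) w ∉ X4 := fun hs =>
    hnot (mem_Lang.2 ⟨hl, _, hs, At_seqOf (m := 2) w⟩)
  simp only [X4, Set.mem_ofPred_eq] at hns
  push Not at hns
  obtain ⟨i, n, h1, h0, h2⟩ := hns
  obtain ⟨p, hp, rfl, hp1⟩ := seqOf_ne (m := 2) (by decide) h1
  obtain ⟨q, hq, hpq, hq2⟩ := seqOf_ne (m := 2) (by decide) h2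
  have hpq' : p + 1 + n + n ^ 2 = q := by exact_mod_cast hpq
  have h0' : ∀ j (hj : j < n ^ 2), w[p + 1 + n + j]'(by omega) = 0 := by
    intro j hj
    have := h0 j hj
    have e : (p : ℤ) + 1 + n + j = ((p + 1 + n + j : ℕ) : ℤ) := by push_cast; ring
    rw [e, seqOf_nat, List.getD_eq_getElem _ _ (by omega)] at this
    exact this
  have hp0 : p = 0 := by
    by_contra hp0
    obtain ⟨p, rfl⟩ : ∃ p', p = p' + 1 := ⟨p - 1, by omega⟩
    have key : ∀ k (hk : k + 1 < w.length), xt (k : ℤ) = w[k + 1] := by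
      intro k hk
      rw [hAt k (by simp; omega)]
      simp
    refine hxt p n ?_ (fun j hj => ?_) ?_
    · rw [key p hp, hp1]
    · have := key (p + 1 + n + j) (by omega)
      push_cast at this
      rw [this, ← h0' j hj]
      congr 1
      omega
    · have := key (p + 1 + n + n ^ 2) (by omega)
      push_cast at this ⊢
      rw [this, ← hq2]
      congr 1
      omega
  subst hp0
  have hqN : q + 1 = w.length := by
    by_contra hqN
    have key : ∀ k (hk : k + 1 < w.length), xd (k : ℤ) = w[k] := by
      intro k hk
      rw [hAd k (by simp; omega)]
      simp
    refine hxd 0 n ?_ (fun j hj => ?_) ?_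
    · have := key 0 (by omega)
      push_cast at this
      rw [this, hp1]
    · have := key (0 + 1 + n + j) (by omega)
      push_cast at this
      rw [zero_add, this, ← h0' j hj]
    · have := key (0 + 1 + n + n ^ 2) (by omega)
      push_cast at this ⊢
      rw [this, ← hq2]
      congr 1
  refine ⟨n, by omega, ?_, fun j hj => ?_⟩
  · rw [List.getElem?_eq_getElem (by omega), ← hq2]
    congr 2
    omega
  · rw [List.getElem?_eq_getElem (by omega), ← h0' j hj]
    congr 2
    omega

theorem X4_hM : hM X4 ≤ 1 / 4 := by
  rw [hM_eq]
  apply limsup_seq_le (MinForbidden X4) _ 100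
  intro N hN
  rcases Set.eq_empty_or_nonempty (MinForbidden X4 N) with he | ⟨w0, hw0⟩
  · rw [he]
    simp
  obtain ⟨n, hNn, -, -⟩ := X4_minForbidden hw0
  have key : ∀ w ∈ MinForbidden X4 N, w.length = N ∧ w[n ^ 2 + n + 1]? = some 2 ∧
      ∀ j < n ^ 2, w[n + 1 + j]? = some 0 := by
    intro w hw
    obtain ⟨n', h1, h2⟩ := X4_minForbidden hw
    have : n' = n := by
      rcases lt_trichotomy n' n with h | h | h
      · nlinarith
      · exact h
      · nlinarith
    subst this
    exact ⟨hw.1, h2⟩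
  have hcard : Nat.card (MinForbidden X4 N) ≤ 3 ^ (n + 1) := by
    have hinj : Set.InjOn (fun w : List (Fin 3) => w.take (n + 1)) (MinForbidden X4 N) := by
      intro a ha b hb hab
      have hab' : a.take (n + 1) = b.take (n + 1) := hab
      obtain ⟨la, a2, a0⟩ := key a ha
      obtain ⟨lb, b2, b0⟩ := key b hb
      apply List.ext_getElem?
      intro i
      rcases lt_or_ge i (n + 1) with hi | hi
      · rw [← List.getElem?_take_of_lt hi, hab', List.getElem?_take_of_lt hi]
      · obtain ⟨j, rfl⟩ : ∃ j, i = n + 1 + j := ⟨i - (n + 1), by omega⟩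
        rcases lt_trichotomy j (n ^ 2) with hj | hj | hj
        · rw [a0 j hj, b0 j hj]
        · have e : n + 1 + j = n ^ 2 + n + 1 := by omega
          rw [e, a2, b2]
        · rw [List.getElem?_eq_none (by omega), List.getElem?_eq_none (by omega)]
    rw [← Nat.card_image_of_injOn hinj]
    refine (card_le_pow (n := n + 1) ?_).trans (by simp)
    rintro _ ⟨w, hw, rfl⟩
    have := (key w hw).1
    simp only [List.length_take]
    nlinarith [min_eq_left (show n + 1 ≤ w.length by nlinarith)]
  have hpos : 0 < Nat.card (MinForbidden X4 N) := by
    have : Finite (MinForbidden X4 N) :=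
      (finite_of_length (n := N) (fun w hw => hw.1)).to_subtype
    have : Nonempty (MinForbidden X4 N) := ⟨⟨w0, hw0⟩⟩
    exact Nat.card_pos
  have h1 : Real.log (Nat.card (MinForbidden X4 N)) ≤ Real.log ((3 : ℝ) ^ (n + 1)) := by
    apply Real.log_le_log (by exact_mod_cast hpos)
    exact_mod_cast hcard
  rw [Real.log_pow] at h1
  have h3 : Real.log 3 ≤ 2 := by
    have := Real.log_le_sub_one_of_pos (show (0 : ℝ) < 3 by norm_num)
    linarith
  have hn9 : 9 ≤ n := by
    by_contra hlt
    have : n ≤ 8 := by omega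
    nlinarith
  have hn9' : (9 : ℝ) ≤ n := by exact_mod_cast hn9
  rw [hNn]
  rw [hNn] at h1
  push_cast at h1 ⊢
  nlinarith

theorem hCstar_le_hC [Fintype A] (X : Set (ℤ → A)) : hCstar X ≤ hC X := by
  rw [hC_eq]
  refine limsup_le_limsup (Eventually.of_forall fun n => ?_) (cobdd_seq (ELC X))
    (bdd_seq (LC X) fun n w hw => hw.1)
  apply div_le_div_of_nonneg_right _ (Nat.cast_nonneg n)
  have hf : (LC X n).Finite := finite_of_length (n := n) (fun w hw => hw.1)
  have hle : Nat.card (ELC X n) ≤ Nat.card (LC X n) :=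
    Nat.card_mono hf (fun w hw => ⟨hw.1, hw.2.1⟩)
  rcases Nat.eq_zero_or_pos (Nat.card (ELC X n)) with h0 | h0
  · rw [h0]
    simp only [Nat.cast_zero, Real.log_zero]
    exact Real.log_natCast_nonneg _
  · exact Real.log_le_log (by exact_mod_cast h0) (by exact_mod_cast hle)

/-- For every subshift `h_ℳ(X) ≤ h_𝒞(X)`, with strict
inequality for some subshift; moreover both `h_ℳ(X) > h*_𝒞(X)` and
`h_ℳ(X) < h*_𝒞(X)` occur. -/
theorem minForbidden_entropy_vs_constraint_entropy :
    (∀ (A : Type) [Fintype A] [TopologicalSpace A] [DiscreteTopology A]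
        (X : Set (ℤ → A)), IsSubshift X → hM X ≤ hC X) ∧
    (∃ (A : Type) (_ : Fintype A) (X : Set (ℤ → A)),
        (letI : TopologicalSpace A := ⊥
         IsSubshift X) ∧ hM X < hC X) ∧
    (∃ (A : Type) (_ : Fintype A) (X : Set (ℤ → A)),
        (letI : TopologicalSpace A := ⊥
         IsSubshift X) ∧ hCstar X < hM X) ∧
    (∃ (A : Type) (_ : Fintype A) (X : Set (ℤ → A)),
        (letI : TopologicalSpace A := ⊥
         IsSubshift X) ∧ hM X < hCstar X) := by
  have h4 : hM X4 < hCstar X4 :=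
    lt_of_le_of_lt X4_hM (lt_of_lt_of_le (by norm_num) X4_hCstar)
  refine ⟨?_, ⟨Fin 3, inferInstance, X4, ⟨X4_closed, X4_shift⟩, ?_⟩,
    ⟨Fin 4, inferInstance, X3, ⟨X3_closed, X3_shift⟩, ?_⟩,
    ⟨Fin 3, inferInstance, X4, ⟨X4_closed, X4_shift⟩, h4⟩⟩
  · intro A _ _ _ X hX
    exact hM_le_hC hX.2
  · exact lt_of_lt_of_le h4 (hCstar_le_hC X4)
  · rw [X3_hCstar]
    exact lt_of_lt_of_le (by norm_num) X3_hM

end QFTPaper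
end
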